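/- arXiv:0907.2051 — 3 statements merged into one kernel-verified Lean document; each statement's English description precedes it below -/
import Mathlib

section
/- There exist absolute constants c > 0 and α ≥ 0 such that for every finite A ⊆ F_p with |A| ≥ p^{1/2}, at least one of the following holds: (i) |A+A|⁸|AA|⁴ ≥ c(log|A|)^{−α}|A|^{14}/p^{1/2}, or (ii) |A+A|⁷|AA|⁴ ≥ c(log|A|)^{−α}|A|^{10}·p. -/
open Finset Pointwise

open scoped Combinatorics.Additive

/-!
Pigeonholing the multiplicative energy of `A` gives an element `e` and a large set `A₁ ⊆ A` of
elements `a` with `|aA ∩ eA| ≥ N`. For such `a`, a dilate `aX` is covered by few translates of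
`eA`. Hence, for a quotient `ξ = (a - b) / (c - d)` of differences of `A₁` and suitable large
`X, Y ⊆ A₁`, the dilate `(c - d)X + (a - b)Y` of `X + ξY` is covered by few translates of
`e(A + A + A + A)`, which bounds `|X + ξY|`. If every `ξ` is such a quotient, one of them nearly
minimises the additive energy of `A₁` and `ξA₁`, and then `X + ξY` is also large. Otherwise, since
`0` is a quotient and `1` generates `ZMod p`, some quotient `ξ` is such that `ξ + 1` is not a
quotient; then `(x, y) ↦ x + (ξ + 1)y` is injective on `A₁ × A₁`, and Plünnecke's inequality for
`X + Y + ξY` bounds `|A₁|³`.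
-/

section Finset

variable {α : Type*}

lemma exists_subset_card_sdiff_le_of_forall_exists_subset [DecidableEq α] {P : Finset α → Prop}
    {C : Finset α} {k : ℝ} (empty : P ∅) (union : ∀ S T, Disjoint S T → P S → P T → P (S ∪ T))
    (h : ∀ S ⊆ C, k < #S → ∃ T ⊆ S, T.Nonempty ∧ P T) :
    ∃ S ⊆ C, (#(C \ S) : ℝ) ≤ k ∧ P S := by
  classical
  obtain ⟨S, hS, hmax⟩ := exists_max_image {S ∈ C.powerset | P S} card ⟨∅, by simp [empty]⟩
  simp only [mem_filter, mem_powerset, and_imp] at hS hmax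
  refine ⟨S, hS.1, ?_, hS.2⟩
  by_contra! hk
  obtain ⟨T, hTC, hT, hPT⟩ := h _ sdiff_subset hk
  have hST : Disjoint S T := disjoint_of_subset_right hTC disjoint_sdiff
  have hle := hmax _ (union_subset hS.1 (hTC.trans sdiff_subset)) (union S T hST hS.2 hPT)
  rw [card_union_of_disjoint hST] at hle
  exact hT.card_pos.ne' (by omega)

lemma card_half_le_card_inter [DecidableEq α] {A S T : Finset α} (hS : S ⊆ A)
    (hSc : (#(A \ S) : ℝ) ≤ #A / 4) (hTc : (#(A \ T) : ℝ) ≤ #A / 4) :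
    (#A : ℝ) / 2 ≤ #(S ∩ T) := by
  have hle : (#(A \ (S ∩ T)) : ℝ) ≤ #(A \ S) + #(A \ T) := by
    rw [sdiff_inter_distrib_right]
    exact_mod_cast card_union_le _ _
  have hadd : (#(A \ (S ∩ T)) : ℝ) + #(S ∩ T) = #A := by
    exact_mod_cast card_sdiff_add_card_eq_card (inter_subset_left.trans hS)
  linarith

lemma sum_eq_sum_range_card_filter_lt {s : Finset α} {f : α → ℕ} {n : ℕ} (hf : ∀ a ∈ s, f a ≤ n) :
    ∑ a ∈ s, f a = ∑ i ∈ range n, #{a ∈ s | i < f a} := by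
  simp_rw [card_filter]
  rw [sum_comm]
  refine sum_congr rfl fun a ha => ?_
  have hrange : {i ∈ range n | i < f a} = range (f a) := by
    ext i
    have := hf a ha
    simp only [mem_range, mem_filter]
    omega
  rw [← card_filter, hrange, card_range]

/-- The weights `1 / N` replace dyadic pigeonholing. -/
lemma exists_sum_le_mul_card_filter_mul_harmonic {s : Finset α} {f : α → ℕ} {n : ℕ} (hn : 0 < n)
    (hf : ∀ a ∈ s, f a ≤ n) :
    ∃ N, 0 < N ∧ N ≤ n ∧ ∑ a ∈ s, (f a : ℝ) ≤ N * #{a ∈ s | N ≤ f a} * harmonic n := by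
  by_contra! h
  have hH : (0 : ℝ) < harmonic n := by exact_mod_cast harmonic_pos hn.ne'
  have hharm : (harmonic n : ℝ) = ∑ i ∈ range n, ((i + 1 : ℕ) : ℝ)⁻¹ := by simp [harmonic]
  refine lt_irrefl (∑ a ∈ s, (f a : ℝ)) ?_
  calc ∑ a ∈ s, (f a : ℝ) = ∑ i ∈ range n, (#{a ∈ s | i + 1 ≤ f a} : ℝ) := by
        exact_mod_cast sum_eq_sum_range_card_filter_lt hf
    _ < ∑ i ∈ range n, (∑ a ∈ s, (f a : ℝ)) / harmonic n * ((i + 1 : ℕ) : ℝ)⁻¹ := by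
        refine sum_lt_sum_of_nonempty (nonempty_range_iff.2 hn.ne') fun i hi => ?_
        have hi := h (i + 1) i.succ_pos (mem_range.1 hi)
        rw [← div_eq_mul_inv, div_div, lt_div_iff₀ (by positivity)]
        linarith
    _ = ∑ a ∈ s, (f a : ℝ) := by rw [← mul_sum, ← hharm, div_mul_cancel₀ _ hH.ne']

end Finset

section Pluennecke

variable {G : Type*} [AddCommGroup G] [DecidableEq G] {A : Finset G}

lemma exists_subset_forall_card_add_add_mul_card_le (hA : A.Nonempty) (B : Finset G) :
    ∃ X ⊆ A, X.Nonempty ∧ ∀ C : Finset G, #(X + B + C) * #A ≤ #(A + B) * #(X + C) := by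
  obtain ⟨X, hX, hmin⟩ := exists_min_image {X ∈ A.powerset | X.Nonempty}
    (fun X => (#(X + B) / #X : ℚ)) ⟨A, by simp [hA]⟩
  simp only [mem_filter, mem_powerset, and_imp] at hX hmin
  obtain ⟨hXA, hX⟩ := hX
  have hratio {Y : Finset G} (hYA : Y ⊆ A) : #(X + B) * #Y ≤ #(Y + B) * #X := by
    obtain rfl | hY := Y.eq_empty_or_nonempty
    · simp
    · have h := hmin Y hYA hY
      rw [div_le_div_iff₀ (mod_cast hX.card_pos) (mod_cast hY.card_pos)] at h
      exact_mod_cast h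
  refine ⟨X, hXA, hX, fun C => Nat.le_of_mul_le_mul_right ?_ hX.card_pos⟩
  have hpet := pluennecke_petridis_inequality_add C fun Y hYX => hratio (hYX.trans hXA)
  calc #(X + B + C) * #A * #X = #(C + X + B) * #X * #A := by
        rw [add_right_comm X, add_comm X C, mul_right_comm]
    _ ≤ #(X + B) * #(C + X) * #A := by gcongr
    _ = #(X + B) * #A * #(X + C) := by rw [add_comm C, mul_right_comm]
    _ ≤ #(A + B) * #X * #(X + C) := Nat.mul_le_mul_right _ (hratio subset_rfl)
    _ = #(A + B) * #(X + C) * #X := mul_right_comm _ _ _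

/-- Petridis' inequality in `G × ℤ` for the summand `B₁ × [0, w₁) ∪ B₂ × [w₁, w₁ + w₂)`. -/
lemma exists_subset_forall_weighted_card_add_add_mul_card_le (hA : A.Nonempty) (B₁ B₂ : Finset G)
    (w₁ w₂ : ℕ) :
    ∃ X ⊆ A, X.Nonempty ∧ ∀ C : Finset G,
      (w₁ * #(X + B₁ + C) + w₂ * #(X + B₂ + C)) * #A ≤
        (w₁ * #(A + B₁) + w₂ * #(A + B₂)) * #(X + C) := by
  set I₁ : Finset ℤ := Ico 0 w₁
  set I₂ : Finset ℤ := Ico w₁ (w₁ + w₂)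
  have hI : Disjoint I₁ I₂ := Ico_disjoint_Ico_consecutive _ _ _
  have hlift (Y Z : Finset G) : Y ×ˢ ({0} : Finset ℤ) + Z ×ˢ {0} = (Y + Z) ×ˢ {0} := by
    rw [product_add_product_comm, singleton_add_singleton, add_zero]
  have hcard (Y : Finset G) :
      #(Y ×ˢ {0} + (B₁ ×ˢ I₁ ∪ B₂ ×ˢ I₂)) = w₁ * #(Y + B₁) + w₂ * #(Y + B₂) := by
    rw [add_union, product_add_product_comm, product_add_product_comm, singleton_zero, zero_add,
      zero_add, card_union_of_disjoint (disjoint_product.2 (.inr hI)), card_product, card_product,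
      Int.card_Ico, Int.card_Ico, sub_zero, add_sub_cancel_left, Int.toNat_natCast,
      Int.toNat_natCast, mul_comm, mul_comm #(Y + B₂)]
  obtain ⟨X', hX'A, hX', hpet⟩ := exists_subset_forall_card_add_add_mul_card_le
    (hA.product (singleton_nonempty (0 : ℤ))) (B₁ ×ˢ I₁ ∪ B₂ ×ˢ I₂)
  obtain ⟨X, hXA, rfl⟩ : ∃ X ⊆ A, X' = X ×ˢ {0} := by
    rw [product_singleton] at hX'A
    simpa only [product_singleton] using subset_map_iff.1 hX'A
  refine ⟨X, hXA, hX'.fst, fun C => ?_⟩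
  have hC := hpet (C ×ˢ {0})
  rwa [add_right_comm, hlift, hcard, hcard, card_product, card_product, card_singleton,
    mul_one, mul_one, add_right_comm X C, add_right_comm X C] at hC

lemma exists_subset_card_add_add_mul_sq_le (hA : A.Nonempty) (B₁ B₂ : Finset G) :
    ∃ X ⊆ A, X.Nonempty ∧ #(X + B₁ + B₂) * #A ^ 2 ≤ 4 * #(A + B₁) * #(A + B₂) * #X := by
  obtain rfl | hB₁ := B₁.eq_empty_or_nonempty
  · exact ⟨A, subset_rfl, hA, by simp⟩
  obtain rfl | hB₂ := B₂.eq_empty_or_nonempty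
  · exact ⟨A, subset_rfl, hA, by simp⟩
  obtain ⟨X, hXA, hX, hpet⟩ := exists_subset_forall_weighted_card_add_add_mul_card_le hA B₁ B₂
    #(A + B₂) #(A + B₁)
  have h₁ : #(X + B₁ + B₂) * #A ≤ 2 * #(A + B₁) * #(X + B₂) := by
    refine Nat.le_of_mul_le_mul_left ?_ (hA.add hB₂).card_pos
    linarith [hpet B₂, Nat.zero_le (#(A + B₁) * #(X + B₂ + B₂) * #A)]
  have h₂ : #(X + B₂) * #A ≤ 2 * #(A + B₂) * #X := by
    refine Nat.le_of_mul_le_mul_left ?_ (hA.add hB₁).card_pos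
    have h0 := hpet 0
    rw [add_zero, add_zero, add_zero] at h0
    linarith [Nat.zero_le (#(A + B₂) * #(X + B₁) * #A)]
  refine ⟨X, hXA, hX, ?_⟩
  calc #(X + B₁ + B₂) * #A ^ 2 = #(X + B₁ + B₂) * #A * #A := by ring
    _ ≤ 2 * #(A + B₁) * #(X + B₂) * #A := by gcongr
    _ = 2 * #(A + B₁) * (#(X + B₂) * #A) := by ring
    _ ≤ 2 * #(A + B₁) * (2 * #(A + B₂) * #X) := by gcongr
    _ = 4 * #(A + B₁) * #(A + B₂) * #X := by ring

lemma exists_subset_card_add_add_add_mul_cube_le (hA : A.Nonempty) (B : Finset G) :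
    ∃ X ⊆ A, X.Nonempty ∧ #(X + (B + B + B)) * #A ^ 3 ≤ #(A + B) ^ 3 * #X := by
  obtain ⟨X, hXA, hX, hpet⟩ := exists_subset_forall_card_add_add_mul_card_le hA B
  refine ⟨X, hXA, hX, ?_⟩
  have h₁ : #(X + B) * #A ≤ #(A + B) * #X := by simpa using hpet 0
  calc #(X + (B + B + B)) * #A ^ 3 = #(X + B + (B + B)) * #A * #A ^ 2 := by
        rw [add_assoc B, ← add_assoc X]; ring
    _ ≤ #(A + B) * #(X + (B + B)) * #A ^ 2 := Nat.mul_le_mul_right _ (hpet _)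
    _ = #(A + B) * (#(X + B + B) * #A) * #A := by rw [← add_assoc]; ring
    _ ≤ #(A + B) * (#(A + B) * #(X + B)) * #A :=
        Nat.mul_le_mul_right _ (Nat.mul_le_mul_left _ (hpet B))
    _ = #(A + B) ^ 2 * (#(X + B) * #A) := by ring
    _ ≤ #(A + B) ^ 2 * (#(A + B) * #X) := by gcongr
    _ = #(A + B) ^ 3 * #X := by ring

lemma exists_half_card_add_add_add_le (hA : A.Nonempty) (B : Finset G) :
    ∃ S ⊆ A, (#A : ℝ) / 2 ≤ #S ∧
      (#(S + (B + B + B)) : ℝ) ≤ 8 * #(A + B) ^ 3 / #A ^ 3 * #S := by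
  have hA0 : (0 : ℝ) < #A := by exact_mod_cast hA.card_pos
  obtain ⟨S, hSA, hcompl, hS⟩ := exists_subset_card_sdiff_le_of_forall_exists_subset
    (P := fun S => (#(S + (B + B + B)) : ℝ) ≤ 8 * #(A + B) ^ 3 / #A ^ 3 * #S) (C := A)
    (k := #A / 2) (by simp)
    (fun S T hST hS hT => by
      have hle : (#(S ∪ T + (B + B + B)) : ℝ) ≤ #(S + (B + B + B)) + #(T + (B + B + B)) := by
        rw [union_add]; exact_mod_cast card_union_le _ _
      rw [card_union_of_disjoint hST]
      push_cast
      linarith)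
    (fun S hSA hS => by
      have hS0 : (0 : ℝ) < #S := by linarith
      obtain ⟨X, hXS, hX, hle⟩ :=
        exists_subset_card_add_add_add_mul_cube_le (card_pos.1 (mod_cast hS0)) B
      refine ⟨X, hXS, hX, ?_⟩
      have hle : (#(X + (B + B + B)) : ℝ) * #S ^ 3 ≤ #(S + B) ^ 3 * #X := by exact_mod_cast hle
      have hSB : (#(S + B) : ℝ) ≤ #(A + B) := by
        exact_mod_cast card_le_card (add_subset_add_right hSA)
      calc (#(X + (B + B + B)) : ℝ) ≤ #(S + B) ^ 3 * #X / #S ^ 3 := by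
            rwa [le_div_iff₀ (by positivity)]
        _ ≤ #(A + B) ^ 3 * #X / (#A / 2) ^ 3 := by gcongr
        _ = 8 * #(A + B) ^ 3 / #A ^ 3 * #X := by field_simp; ring)
  refine ⟨S, hSA, ?_, hS⟩
  have : (#(A \ S) : ℝ) + #S = #A := by exact_mod_cast card_sdiff_add_card_eq_card hSA
  linarith

lemma exists_half_card_fourfold_add_le (hA : A.Nonempty) :
    ∃ S ⊆ A, (#A : ℝ) / 2 ≤ #S ∧ (#(S + S + (S + S)) : ℝ) ≤ 8 * #(A + A) ^ 3 / #A ^ 2 := by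
  have : (0 : ℝ) < #A := by exact_mod_cast hA.card_pos
  obtain ⟨S, hSA, hS, hle⟩ := exists_half_card_add_add_add_le hA A
  refine ⟨S, hSA, hS, ?_⟩
  have hsub : S + S + (S + S) ⊆ S + (A + A + A) := by
    rw [add_assoc, add_assoc A]; gcongr
  calc (#(S + S + (S + S)) : ℝ) ≤ #(S + (A + A + A)) := by exact_mod_cast card_le_card hsub
    _ ≤ 8 * #(A + A) ^ 3 / #A ^ 3 * #S := hle
    _ ≤ 8 * #(A + A) ^ 3 / #A ^ 3 * #A := by gcongr
    _ = 8 * #(A + A) ^ 3 / #A ^ 2 := by field_simp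

lemma exists_quarter_zero_notMem_card_fourfold_add_le (hA : 2 ≤ #A) :
    ∃ B ⊆ A, 0 ∉ B ∧ (#A : ℝ) / 4 ≤ #B ∧
      (#(B + B + (B + B)) : ℝ) ≤ 8 * #(A + A) ^ 3 / #B ^ 2 := by
  have hA2 : (2 : ℝ) ≤ #A := by exact_mod_cast hA
  have hpred : (#A : ℝ) ≤ #(A.erase 0) + 1 := by
    exact_mod_cast Nat.sub_le_iff_le_add.1 pred_card_le_card_erase
  have herase0 : (0 : ℝ) < #(A.erase 0) := by linarith
  have herase : A.erase 0 ⊆ A := erase_subset _ _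
  obtain ⟨B, hB, hBcard, hfour⟩ :=
    exists_half_card_fourfold_add_le (card_pos.1 (Nat.cast_pos.1 herase0))
  have hB0 : (0 : ℝ) < #B := by linarith
  exact ⟨B, hB.trans herase, fun h => notMem_erase _ _ (hB h), by linarith,
    hfour.trans (by gcongr)⟩

end Pluennecke

section Covering

variable {G : Type*} [AddCommGroup G] [DecidableEq G]

lemma addEnergy_neg_right (s t : Finset G) : E[s, -t] = E[s, t] := by
  refine card_nbij' (fun x => (x.1, -x.2.2, -x.2.1)) (fun x => (x.1, -x.2.2, -x.2.1)) ?_ ?_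
    (fun _ _ => by simp) (fun _ _ => by simp) <;>
  · rintro ⟨⟨a, b⟩, c, d⟩ hx
    simp only [coe_filter, mem_product, mem_neg', neg_neg, Set.mem_ofPred_eq] at hx ⊢
    exact ⟨⟨hx.1.1, hx.1.2.symm⟩, by simpa [← sub_eq_add_neg, sub_eq_sub_iff_add_eq_add] using hx.2⟩

lemma exists_addEnergy_le_mul_card_inter_vadd (C D : Finset G) :
    ∃ s : G, E[C, D] ≤ #C * #D * #(C ∩ (s +ᵥ D)) := by
  obtain h | h := (C - D).eq_empty_or_nonempty
  · obtain rfl | rfl := sub_eq_empty.1 h <;> exact ⟨0, by simp⟩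
  obtain ⟨s, -, hs⟩ := exists_max_image (C - D) (fun s => #(C ∩ (s +ᵥ D))) h
  refine ⟨s, ?_⟩
  rw [mul_comm, ← card_product]
  refine card_le_mul_card_image_of_maps_to (f := fun x => (x.1.1, x.2.2)) (by simp +contextual) _ ?_
  rintro ⟨c, d⟩ hcd
  rw [mem_product] at hcd
  refine le_trans ?_ (hs (c - d) (sub_mem_sub hcd.1 hcd.2))
  refine card_le_card_of_injOn (fun x => x.1.2) ?_ ?_
  · rintro ⟨⟨c₁, c₂⟩, d₁, d₂⟩ hx
    simp only [coe_filter, mem_filter, mem_product, Set.mem_ofPred_eq, Prod.mk.injEq] at hx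
    obtain ⟨⟨⟨⟨-, hc₂⟩, hd₁, -⟩, h⟩, rfl, rfl⟩ := hx
    refine mem_coe.2 (mem_inter.2 ⟨hc₂, mem_vadd_finset.2 ⟨d₁, hd₁, ?_⟩⟩)
    rw [vadd_eq_add, sub_add_eq_add_sub, h, add_sub_cancel_right]
  · rintro ⟨⟨c₁, c₂⟩, d₁, d₂⟩ hx ⟨⟨c₁', c₂'⟩, d₁', d₂'⟩ hx' (rfl : c₂ = c₂')
    simp only [coe_filter, mem_filter, mem_product, Set.mem_ofPred_eq, Prod.mk.injEq] at hx hx'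
    obtain ⟨⟨-, h⟩, rfl, rfl⟩ := hx
    obtain ⟨⟨-, h'⟩, rfl, rfl⟩ := hx'
    rw [add_left_cancel (h.trans h'.symm)]

lemma exists_card_mul_card_le_mul_card_inter_vadd {C D : Finset G} {K : ℕ}
    (h : #(C + D) ≤ K ∨ #(C - D) ≤ K) :
    ∃ s : G, #C * #D ≤ K * #(C ∩ (s +ᵥ D)) := by
  obtain h0 | h0 := (#C * #D).eq_zero_or_pos
  · exact ⟨0, by simp [h0]⟩
  have henergy : #C ^ 2 * #D ^ 2 ≤ K * E[C, D] := by
    rcases h with h | h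
    · exact (le_card_add_mul_addEnergy C D).trans (Nat.mul_le_mul_right _ h)
    · rw [← addEnergy_neg_right, ← card_neg D]
      rw [sub_eq_add_neg] at h
      exact (le_card_add_mul_addEnergy C (-D)).trans (Nat.mul_le_mul_right _ h)
  obtain ⟨s, hs⟩ := exists_addEnergy_le_mul_card_inter_vadd C D
  refine ⟨s, Nat.le_of_mul_le_mul_left ?_ h0⟩
  calc #C * #D * (#C * #D) = #C ^ 2 * #D ^ 2 := by ring
    _ ≤ K * (#C * #D * #(C ∩ (s +ᵥ D))) := henergy.trans (Nat.mul_le_mul_left _ hs)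
    _ = #C * #D * (K * #(C ∩ (s +ᵥ D))) := by ring

lemma exists_subset_add_of_card_add_or_sub_le {C D : Finset G} {K : ℕ} (hD : D.Nonempty)
    (h : #(C + D) ≤ K ∨ #(C - D) ≤ K) :
    ∃ S ⊆ C, (#(C \ S) : ℝ) ≤ #C / 4 ∧ ∃ T : Finset G, S ⊆ T + D ∧ #T * #D ≤ 4 * K := by
  obtain rfl | hC := C.eq_empty_or_nonempty
  · exact ⟨∅, by simp, by simp, ∅, by simp, by simp⟩
  obtain ⟨S, hSC, hcompl, T, hST, hT⟩ := exists_subset_card_sdiff_le_of_forall_exists_subset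
    (P := fun S => ∃ T : Finset G, S ⊆ T + D ∧ #C * (#T * #D) ≤ 4 * K * #S) (C := C)
    (k := #C / 4) ⟨∅, by simp⟩
    (fun S S' hSS' ⟨T, hST, hT⟩ ⟨T', hST', hT'⟩ => by
      refine ⟨T ∪ T', by rw [union_add]; exact union_subset_union hST hST', ?_⟩
      rw [card_union_of_disjoint hSS']
      calc #C * (#(T ∪ T') * #D) ≤ #C * ((#T + #T') * #D) := by gcongr; exact card_union_le _ _
        _ ≤ 4 * K * (#S + #S') := by linarith)
    (fun S hSC hS => by
      have hCS : #C ≤ 4 * #S := by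
        rw [div_lt_iff₀' four_pos] at hS
        exact_mod_cast hS.le
      obtain ⟨s, hs⟩ := exists_card_mul_card_le_mul_card_inter_vadd
        (h.imp (card_le_card (add_subset_add_right hSC)).trans
          (card_le_card (sub_subset_sub_right hSC)).trans)
      have hle : #C * #D ≤ 4 * K * #(S ∩ (s +ᵥ D)) := by
        linarith [Nat.mul_le_mul_right #D hCS]
      refine ⟨_, inter_subset_left, ?_, {s}, ?_, by simpa using hle⟩
      · rw [← card_pos]
        exact Nat.pos_of_mul_pos_left ((Nat.mul_pos hC.card_pos hD.card_pos).trans_le hle)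
      · rw [singleton_add]; exact inter_subset_right)
  refine ⟨S, hSC, hcompl, T, hST, Nat.le_of_mul_le_mul_left ?_ hC.card_pos⟩
  calc #C * (#T * #D) ≤ 4 * K * #S := hT
    _ ≤ 4 * K * #C := by gcongr
    _ = #C * (4 * K) := mul_comm _ _

end Covering

section Field

variable {F : Type*} [Field F] [DecidableEq F] {A B : Finset F}

lemma mulEnergy_self_le_sum_card_smul_inter_smul (h0 : 0 ∉ B) :
    Eₘ[B] ≤ ∑ b ∈ B, ∑ a ∈ B, #(a • B ∩ b • B) := by
  rw [← sum_product', mulEnergy, card_eq_sum_card_fiberwise (f := fun x => (x.1.2, x.1.1))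
    (t := B ×ˢ B) fun x hx => by simp_all]
  refine sum_le_sum fun ⟨b, a⟩ hba => ?_
  rw [mem_product] at hba
  refine card_le_card_of_injOn (fun x => x.1.1 * x.2.1) ?_ ?_
  · rintro ⟨⟨a', b'⟩, x, y⟩ hx
    simp only [coe_filter, mem_filter, mem_product, Set.mem_ofPred_eq, Prod.mk.injEq] at hx
    obtain ⟨⟨⟨-, hx, hy⟩, h⟩, rfl, rfl⟩ := hx
    exact mem_coe.2 (mem_inter.2
      ⟨mem_smul_finset.2 ⟨x, hx, rfl⟩, mem_smul_finset.2 ⟨y, hy, h.symm⟩⟩)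
  · rintro ⟨⟨a₁, b₁⟩, x₁, y₁⟩ hx₁ ⟨⟨a₂, b₂⟩, x₂, y₂⟩ hx₂ h
    simp only [coe_filter, mem_filter, mem_product, Set.mem_ofPred_eq, Prod.mk.injEq] at hx₁ hx₂
    obtain ⟨⟨-, h₁⟩, rfl, rfl⟩ := hx₁
    obtain ⟨⟨-, h₂⟩, rfl, rfl⟩ := hx₂
    have hx : x₁ = x₂ := mul_left_cancel₀ (ne_of_mem_of_not_mem hba.2 h0) h
    subst hx
    rw [mul_left_cancel₀ (ne_of_mem_of_not_mem hba.1 h0) (h₁.symm.trans h₂)]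

lemma exists_card_pow_three_le_card_mul_mul_sum (hB : B.Nonempty) (h0 : 0 ∉ B) :
    ∃ b ∈ B, #B ^ 3 ≤ #(B * B) * ∑ a ∈ B, #(a • B ∩ b • B) := by
  obtain ⟨b, hb, hmax⟩ := exists_max_image B (fun b => ∑ a ∈ B, #(a • B ∩ b • B)) hB
  have henergy : Eₘ[B] ≤ #B * ∑ a ∈ B, #(a • B ∩ b • B) :=
    (mulEnergy_self_le_sum_card_smul_inter_smul h0).trans (sum_le_card_nsmul B _ _ hmax)
  refine ⟨b, hb, Nat.le_of_mul_le_mul_left ?_ hB.card_pos⟩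
  calc #B * #B ^ 3 = #B ^ 2 * #B ^ 2 := by ring
    _ ≤ #(B * B) * (#B * ∑ a ∈ B, #(a • B ∩ b • B)) :=
        (le_card_mul_mul_mulEnergy B B).trans (Nat.mul_le_mul_left _ henergy)
    _ = #B * (#(B * B) * ∑ a ∈ B, #(a • B ∩ b • B)) := by ring

lemma exists_card_pow_three_le_mul_card_popular (hB : B.Nonempty) (h0 : 0 ∉ B) :
    ∃ e : F, ∃ N, 0 < N ∧
      (#B : ℝ) ^ 3 ≤ #(B * B) * (N * #{a ∈ B | N ≤ #(a • B ∩ e • B)} * harmonic #B) := by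
  obtain ⟨e, -, he⟩ := exists_card_pow_three_le_card_mul_mul_sum hB h0
  obtain ⟨N, hN, -, hlevel⟩ := exists_sum_le_mul_card_filter_mul_harmonic
    (s := B) (f := fun a => #(a • B ∩ e • B)) hB.card_pos
    fun a _ => (card_le_card inter_subset_left).trans card_smul_finset_le
  refine ⟨e, N, hN, ?_⟩
  calc (#B : ℝ) ^ 3 ≤ #(B * B) * ∑ a ∈ B, (#(a • B ∩ e • B) : ℝ) := by exact_mod_cast he
    _ ≤ #(B * B) * (N * #{a ∈ B | N ≤ #(a • B ∩ e • B)} * harmonic #B) := by gcongr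

lemma exists_smul_subset_add_smul {A₁ : Finset F} (hA₁ : A₁ ⊆ A) {a e u : F} {N : ℕ}
    (ha : a ≠ 0) (hu : u = a ∨ u = -a) (hN : 0 < N) (h : N ≤ #(a • A ∩ e • A)) :
    ∃ S ⊆ A₁, (#(A₁ \ S) : ℝ) ≤ #A₁ / 4 ∧
      ∃ T : Finset F, u • S ⊆ T + e • A ∧ (#T : ℝ) ≤ 4 * #(A + A) / N := by
  set D := a • A ∩ e • A with hD
  have hu0 : u ≠ 0 := by rcases hu with rfl | rfl <;> simpa using ha
  have hsmul : u • A₁ ⊆ u • A := smul_finset_subset_smul_finset hA₁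
  have hsum : #(u • A₁ + D) ≤ #(A + A) ∨ #(u • A₁ - D) ≤ #(A + A) := by
    rw [← card_smul_finset₀ hu0 (A + A), smul_add]
    refine hu.imp (fun hu => ?_) fun hu => ?_
    · exact card_le_card (add_subset_add hsmul (hu ▸ inter_subset_left))
    · rw [sub_eq_add_neg]
      refine card_le_card (add_subset_add hsmul ?_)
      rw [hu, neg_smul_finset]
      exact neg_subset_neg inter_subset_left
  obtain ⟨S', hS', hcompl, T, hST, hT⟩ :=
    exists_subset_add_of_card_add_or_sub_le (card_pos.1 (hN.trans_le h)) hsum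
  obtain ⟨S, hSA, rfl⟩ := subset_image_iff.1 hS'
  change (#(u • A₁ \ u • S) : ℝ) ≤ #(u • A₁) / 4 at hcompl
  rw [← smul_finset_sdiff₀ hu0, card_smul_finset₀ hu0, card_smul_finset₀ hu0] at hcompl
  refine ⟨S, hSA, hcompl, T, hST.trans (add_subset_add_left inter_subset_right), ?_⟩
  rw [le_div_iff₀ (mod_cast hN)]
  exact_mod_cast (Nat.mul_le_mul_left _ h).trans hT

lemma exists_sub_smul_subset_add_smul {A₁ : Finset F} (hA₁ : A₁ ⊆ A) (h0 : 0 ∉ A) {e : F} {N : ℕ}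
    (hN : 0 < N) (h : ∀ a ∈ A₁, N ≤ #(a • A ∩ e • A)) {a b : F} (ha : a ∈ A₁) (hb : b ∈ A₁) :
    ∃ X ⊆ A₁, (#A₁ : ℝ) / 2 ≤ #X ∧ ∃ T : Finset F,
      (a - b) • X ⊆ T + e • (A + A) ∧ (#T : ℝ) ≤ (4 * #(A + A) / N) ^ 2 := by
  have hne {a : F} (ha : a ∈ A₁) : a ≠ 0 := ne_of_mem_of_not_mem (hA₁ ha) h0
  obtain ⟨S, hS, hScompl, T, hST, hT⟩ :=
    exists_smul_subset_add_smul hA₁ (hne ha) (.inl rfl) hN (h a ha)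
  obtain ⟨S', -, hScompl', T', hST', hT'⟩ :=
    exists_smul_subset_add_smul hA₁ (hne hb) (.inr rfl) hN (h b hb)
  refine ⟨S ∩ S', inter_subset_left.trans hS, card_half_le_card_inter hS hScompl hScompl',
    T + T', ?_, ?_⟩
  · calc (a - b) • (S ∩ S') ⊆ a • (S ∩ S') + -b • (S ∩ S') := by
          refine image_subset_iff.2 fun x hx => ?_
          rw [sub_eq_add_neg, add_smul]
          exact add_mem_add (smul_mem_smul_finset hx) (smul_mem_smul_finset hx)
      _ ⊆ a • S + -b • S' := by gcongr <;> simp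
      _ ⊆ T + e • A + (T' + e • A) := add_subset_add hST hST'
      _ = T + T' + e • (A + A) := by rw [smul_add, add_add_add_comm]
  · calc (#(T + T') : ℝ) ≤ #T * #T' := by exact_mod_cast card_add_le
      _ ≤ 4 * #(A + A) / N * (4 * #(A + A) / N) := by gcongr
      _ = (4 * #(A + A) / N) ^ 2 := (sq _).symm

lemma exists_half_card_sub_smul_add_sub_smul_le {A₁ : Finset F} (hA₁ : A₁ ⊆ A) (h0 : 0 ∉ A)
    {e : F} {N : ℕ} (hN : 0 < N) (h : ∀ a ∈ A₁, N ≤ #(a • A ∩ e • A)) {a b c d : F}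
    (ha : a ∈ A₁) (hb : b ∈ A₁) (hc : c ∈ A₁) (hd : d ∈ A₁) :
    ∃ X ⊆ A₁, ∃ Y ⊆ A₁, (#A₁ : ℝ) / 2 ≤ #X ∧ (#A₁ : ℝ) / 2 ≤ #Y ∧
      (#((c - d) • X + (a - b) • Y) : ℝ) ≤ (4 * #(A + A) / N) ^ 4 * #(A + A + (A + A)) := by
  obtain ⟨X, hX, hXcard, T, hXT, hT⟩ := exists_sub_smul_subset_add_smul hA₁ h0 hN h hc hd
  obtain ⟨Y, hY, hYcard, T', hYT, hT'⟩ := exists_sub_smul_subset_add_smul hA₁ h0 hN h ha hb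
  refine ⟨X, hX, Y, hY, hXcard, hYcard, ?_⟩
  have hsub : (c - d) • X + (a - b) • Y ⊆ T + T' + e • (A + A + (A + A)) := by
    rw [smul_add e, add_add_add_comm]
    exact add_subset_add hXT hYT
  have hle : #((c - d) • X + (a - b) • Y) ≤ #T * #T' * #(A + A + (A + A)) :=
    (card_le_card hsub).trans <| card_add_le.trans <| Nat.mul_le_mul card_add_le card_smul_finset_le
  calc (#((c - d) • X + (a - b) • Y) : ℝ) ≤ #T * #T' * #(A + A + (A + A)) := by exact_mod_cast hle
    _ ≤ (4 * #(A + A) / N) ^ 2 * (4 * #(A + A) / N) ^ 2 * #(A + A + (A + A)) := by gcongr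
    _ = (4 * #(A + A) / N) ^ 4 * #(A + A + (A + A)) := by ring

end Field

section DifferenceQuotients

variable {F : Type*} [Field F] [DecidableEq F] {A X Y : Finset F} {ξ : F}

/-- The quotient set `(A - A) / ((A - A) \ {0})`, that is, the set of slopes of the lines through
two points of `A × A` with distinct first coordinates. -/
def differenceQuotients (A : Finset F) : Finset F := (A - A) / (A - A).erase 0

lemma mem_differenceQuotients : ξ ∈ differenceQuotients A ↔
    ∃ a ∈ A, ∃ b ∈ A, ∃ c ∈ A, ∃ d ∈ A, c ≠ d ∧ (a - b) / (c - d) = ξ := by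
  simp only [differenceQuotients, mem_div, mem_sub, mem_erase]
  constructor
  · rintro ⟨_, ⟨a, ha, b, hb, rfl⟩, _, ⟨hne, c, hc, d, hd, rfl⟩, h⟩
    exact ⟨a, ha, b, hb, c, hc, d, hd, sub_ne_zero.1 hne, h⟩
  · rintro ⟨a, ha, b, hb, c, hc, d, hd, hne, h⟩
    exact ⟨_, ⟨a, ha, b, hb, rfl⟩, _, ⟨sub_ne_zero.2 hne, c, hc, d, hd, rfl⟩, h⟩

lemma zero_mem_differenceQuotients (hA : A.Nontrivial) : 0 ∈ differenceQuotients A := by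
  obtain ⟨c, hc, d, hd, hne⟩ := hA
  exact mem_differenceQuotients.2 ⟨c, hc, c, hc, c, hc, d, hd, hne, by simp⟩

lemma card_add_smul_of_notMem_differenceQuotients (hX : X ⊆ A) (hY : Y ⊆ A)
    (hξ : ξ ∉ differenceQuotients A) : #(X + ξ • Y) = #X * #Y := by
  rw [show X + ξ • Y = image₂ (fun x y => x + ξ * y) X Y from image₂_image_right _ _,
    card_image₂_iff]
  rintro ⟨x, y⟩ ⟨hx, hy⟩ ⟨x', y'⟩ ⟨hx', hy'⟩ (h : x + ξ * y = x' + ξ * y')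
  have heq : y = y' := by
    by_contra hne
    refine hξ (mem_differenceQuotients.2 ⟨x', hX hx', x, hX hx, y, hY hy, y', hY hy', hne, ?_⟩)
    rw [div_eq_iff (sub_ne_zero.2 hne)]
    linear_combination -h
  subst heq
  rw [add_right_cancel h]

lemma card_sq_le_card_of_notMem_differenceQuotients [Fintype F]
    (hξ : ξ ∉ differenceQuotients A) : #A ^ 2 ≤ Fintype.card F := by
  rw [sq, ← card_add_smul_of_notMem_differenceQuotients subset_rfl subset_rfl hξ]
  exact card_le_univ _

/-- Plünnecke controls `X + Y + ξ • Y`, which contains the full-size set `X + (ξ + 1) • Y`. -/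
lemma card_sq_mul_card_le_of_add_one_notMem_differenceQuotients (hX : X ⊆ A) (hY : Y ⊆ A)
    (hξ : ξ + 1 ∉ differenceQuotients A) : #X ^ 2 * #Y ≤ 4 * #(X + Y) * #(X + ξ • Y) := by
  obtain rfl | hXne := X.eq_empty_or_nonempty
  · simp
  obtain ⟨Z, hZX, hZ, hle⟩ := exists_subset_card_add_add_mul_sq_le hXne Y (ξ • Y)
  have hsub : Z + (ξ + 1) • Y ⊆ Z + Y + ξ • Y := by
    rw [add_assoc]
    refine add_subset_add_left (image_subset_iff.2 fun y hy => ?_)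
    rw [add_smul, one_smul, add_comm (ξ • y)]
    exact add_mem_add hy (smul_mem_smul_finset hy)
  refine Nat.le_of_mul_le_mul_left ?_ hZ.card_pos
  calc #Z * (#X ^ 2 * #Y) = #(Z + (ξ + 1) • Y) * #X ^ 2 := by
        rw [card_add_smul_of_notMem_differenceQuotients (hZX.trans hX) hY hξ]; ring
    _ ≤ #(Z + Y + ξ • Y) * #X ^ 2 := Nat.mul_le_mul_right _ (card_le_card hsub)
    _ ≤ 4 * #(X + Y) * #(X + ξ • Y) * #Z := hle
    _ = #Z * (4 * #(X + Y) * #(X + ξ • Y)) := mul_comm _ _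

end DifferenceQuotients

section Dilates

variable {F : Type*} [Field F] [DecidableEq F]

lemma addEnergy_units_smul_right (A B : Finset F) (ξ : Fˣ) :
    E[A, ξ • B] =
      #{x ∈ (A ×ˢ A) ×ˢ B ×ˢ B | x.1.1 + ξ • x.2.1 = x.1.2 + ξ • x.2.2} := by
  refine card_nbij' (fun x => (x.1, ξ⁻¹ • x.2)) (fun x => (x.1, ξ • x.2)) ?_ ?_ ?_ ?_
  · rintro ⟨⟨a, a'⟩, b, b'⟩ hx
    simpa [mem_product, ← mem_inv_smul_finset_iff] using hx
  · rintro ⟨⟨a, a'⟩, b, b'⟩ hx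
    simpa [mem_product] using hx
  · exact fun _ _ => by simp
  · exact fun _ _ => by simp

lemma card_filter_units_add_mul_eq_le_one [Fintype F] {a a' b b' : F} (h : (a, b) ≠ (a', b')) :
    #{ξ : Fˣ | a + ξ • b = a' + ξ • b'} ≤ 1 := by
  refine card_le_one.2 fun s hs t ht => ?_
  simp only [mem_filter, mem_univ, true_and, Units.smul_def, smul_eq_mul] at hs ht
  have hb : b - b' ≠ 0 := fun hb => h (by
    obtain rfl := sub_eq_zero.1 hb
    rw [add_right_cancel hs])
  exact Units.ext (mul_right_cancel₀ hb (by linear_combination hs - ht))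

lemma exists_card_units_mul_addEnergy_smul_le [Fintype F] (A B : Finset F) :
    ∃ ξ : Fˣ, Fintype.card Fˣ * E[A, ξ • B] ≤
      Fintype.card Fˣ * (#A * #B) + #A ^ 2 * #B ^ 2 := by
  obtain ⟨ξ, -, hmin⟩ := exists_min_image univ (fun ξ : Fˣ => E[A, ξ • B]) ⟨1, mem_univ _⟩
  refine ⟨ξ, ?_⟩
  have hcount (x : (F × F) × F × F) : #{ξ : Fˣ | x.1.1 + ξ • x.2.1 = x.1.2 + ξ • x.2.2} ≤
      (if x.1.1 = x.1.2 ∧ x.2.1 = x.2.2 then Fintype.card Fˣ else 0) + 1 := by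
    split_ifs with hx
    · exact (card_le_univ _).trans (Nat.le_succ _)
    · rw [zero_add]
      exact card_filter_units_add_mul_eq_le_one (by simpa using hx)
  have hdiag : #{x ∈ (A ×ˢ A) ×ˢ B ×ˢ B | x.1.1 = x.1.2 ∧ x.2.1 = x.2.2} = #A * #B := by
    rw [filter_product (fun x : F × F => x.1 = x.2) fun x : F × F => x.1 = x.2, card_product,
      ← diag_eq_filter, ← diag_eq_filter, diag_card, diag_card]
  calc Fintype.card Fˣ * E[A, ξ • B] ≤ ∑ ξ : Fˣ, E[A, ξ • B] := by
        simpa using card_nsmul_le_sum univ _ _ hmin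
    _ = ∑ x ∈ (A ×ˢ A) ×ˢ B ×ˢ B, #{ξ : Fˣ | x.1.1 + ξ • x.2.1 = x.1.2 + ξ • x.2.2} := by
        simp_rw [addEnergy_units_smul_right, card_filter]
        exact sum_comm
    _ ≤ ∑ x ∈ (A ×ˢ A) ×ˢ B ×ˢ B,
          ((if x.1.1 = x.1.2 ∧ x.2.1 = x.2.2 then Fintype.card Fˣ else 0) + 1) :=
        sum_le_sum fun x _ => hcount x
    _ = Fintype.card Fˣ * (#A * #B) + #A ^ 2 * #B ^ 2 := by
        rw [sum_add_distrib, ← sum_filter, sum_const, hdiag, ← card_eq_sum_ones, card_product,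
          card_product, card_product, smul_eq_mul]
        ring

end Dilates

section FiniteField

variable {F : Type*} [Field F] [Fintype F] [DecidableEq F] {A : Finset F} {Q : ℝ}

lemma card_sq_mul_card_units_le_of_forall_exists_half (hA : A.Nonempty)
    (h : ∀ ξ : Fˣ, ∃ X ⊆ A, ∃ Y ⊆ A, (#A : ℝ) / 2 ≤ #X ∧ (#A : ℝ) / 2 ≤ #Y ∧
      (#(X + ξ • Y) : ℝ) ≤ Q) :
    (#A : ℝ) ^ 2 * Fintype.card Fˣ ≤ 16 * Q * (Fintype.card Fˣ + #A ^ 2) := by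
  have : (0 : ℝ) < #A := by exact_mod_cast hA.card_pos
  obtain ⟨ξ, hξ⟩ := exists_card_units_mul_addEnergy_smul_le A A
  obtain ⟨X, hX, Y, hY, hXcard, hYcard, hQ⟩ := h ξ
  have hQ0 : 0 ≤ Q := (Nat.cast_nonneg _).trans hQ
  have henergy : (#X : ℝ) ^ 2 * #Y ^ 2 ≤ Q * E[A, ξ • A] := by
    calc (#X : ℝ) ^ 2 * #Y ^ 2 ≤ #(X + ξ • Y) * E[X, ξ • Y] := by
          rw [← card_smul_finset ξ Y]
          exact_mod_cast le_card_add_mul_addEnergy X (ξ • Y)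
      _ ≤ Q * E[A, ξ • A] := by
          have hmono : E[X, ξ • Y] ≤ E[A, ξ • A] :=
            addEnergy_mono hX (smul_finset_subset_smul_finset hY)
          gcongr
  refine le_of_mul_le_mul_left (a := (#A : ℝ) ^ 2) ?_ (by positivity)
  calc (#A : ℝ) ^ 2 * (#A ^ 2 * Fintype.card Fˣ)
      = 16 * (((#A : ℝ) / 2) ^ 2 * (#A / 2) ^ 2) * Fintype.card Fˣ := by ring
    _ ≤ 16 * ((#X : ℝ) ^ 2 * #Y ^ 2) * Fintype.card Fˣ := by gcongr
    _ ≤ 16 * (Q * E[A, ξ • A]) * Fintype.card Fˣ := by gcongr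
    _ = 16 * Q * (Fintype.card Fˣ * E[A, ξ • A]) := by ring
    _ ≤ 16 * Q * (Fintype.card Fˣ * (#A * #A) + #A ^ 2 * #A ^ 2) := by
        gcongr
        exact_mod_cast hξ
    _ = #A ^ 2 * (16 * Q * (Fintype.card Fˣ + #A ^ 2)) := by ring

lemma card_le_or_card_sq_le_of_forall_exists_half (hA : A.Nonempty)
    (h : ∀ ξ : Fˣ, ∃ X ⊆ A, ∃ Y ⊆ A, (#A : ℝ) / 2 ≤ #X ∧ (#A : ℝ) / 2 ≤ #Y ∧
      (#(X + ξ • Y) : ℝ) ≤ Q) :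
    (Fintype.card F : ℝ) ≤ 64 * Q ∨ ((#A : ℝ) ^ 2 ≤ Fintype.card F ∧ (#A : ℝ) ^ 2 ≤ 32 * Q) := by
  have : (0 : ℝ) < #A := by exact_mod_cast hA.card_pos
  have hQ0 : 0 ≤ Q := by
    obtain ⟨X, -, Y, -, -, -, hQ⟩ := h 1
    exact (Nat.cast_nonneg _).trans hQ
  have hmain := card_sq_mul_card_units_le_of_forall_exists_half hA h
  have hq : (Fintype.card F : ℝ) = Fintype.card Fˣ + 1 := by
    exact_mod_cast Fintype.card_eq_card_units_add_one F
  have hu : (1 : ℝ) ≤ Fintype.card Fˣ := by exact_mod_cast Fintype.card_pos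
  rw [hq]
  obtain hle | hlt := le_or_gt (#A ^ 2) (Fintype.card Fˣ)
  · have hle : (#A : ℝ) ^ 2 ≤ Fintype.card Fˣ := by exact_mod_cast hle
    refine .inr ⟨by linarith, le_of_mul_le_mul_right (a := (Fintype.card Fˣ : ℝ)) ?_ (by linarith)⟩
    calc (#A : ℝ) ^ 2 * Fintype.card Fˣ ≤ 16 * Q * (Fintype.card Fˣ + #A ^ 2) := hmain
      _ ≤ 16 * Q * (Fintype.card Fˣ + Fintype.card Fˣ) := by gcongr
      _ = 32 * Q * Fintype.card Fˣ := by ring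
  · have hlt : (Fintype.card Fˣ : ℝ) ≤ #A ^ 2 := by exact_mod_cast hlt.le
    have hu32 : (Fintype.card Fˣ : ℝ) ≤ 32 * Q := by
      refine le_of_mul_le_mul_left (a := (#A : ℝ) ^ 2) ?_ (by positivity)
      calc (#A : ℝ) ^ 2 * Fintype.card Fˣ ≤ 16 * Q * (Fintype.card Fˣ + #A ^ 2) := hmain
        _ ≤ 16 * Q * (#A ^ 2 + #A ^ 2) := by gcongr
        _ = #A ^ 2 * (32 * Q) := by ring
    exact .inl (by linarith)

end FiniteField

lemma exists_mem_add_one_notMem {n : ℕ} [NeZero n] {s : Set (ZMod n)} (h0 : 0 ∈ s)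
    (hs : s ≠ Set.univ) : ∃ x ∈ s, x + 1 ∉ s := by
  by_contra! h
  refine hs (Set.eq_univ_of_forall fun x => ?_)
  rw [← ZMod.natCast_zmod_val x]
  induction x.val with
  | zero => simpa using h0
  | succ k ih => simpa using h k ih

section Prime

variable {p : ℕ} [Fact p.Prime]

lemma prime_le_or_card_pow_three_le {A : Finset (ZMod p)} (hA : A.Nontrivial) {Q : ℝ}
    (h : ∀ ξ ∈ differenceQuotients A, ∃ X ⊆ A, ∃ Y ⊆ A,
      (#A : ℝ) / 2 ≤ #X ∧ (#A : ℝ) / 2 ≤ #Y ∧ (#(X + ξ • Y) : ℝ) ≤ Q) :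
    (p : ℝ) ≤ 64 * Q ∨ ((#A : ℝ) ^ 2 ≤ p ∧ (#A : ℝ) ^ 3 ≤ 32 * #(A + A) * Q) := by
  by_cases hall : (differenceQuotients A : Set (ZMod p)) = Set.univ
  · have hdich := card_le_or_card_sq_le_of_forall_exists_half hA.nonempty
      fun ξ : (ZMod p)ˣ => h ξ (mem_coe.1 (hall ▸ Set.mem_univ _))
    rw [ZMod.card] at hdich
    refine hdich.imp_right fun ⟨hp, hsq⟩ => ⟨hp, ?_⟩
    calc (#A : ℝ) ^ 3 = #A * #A ^ 2 := by ring
      _ ≤ #(A + A) * (32 * Q) := by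
          have hcard : #A ≤ #(A + A) := card_le_card_add_right hA.nonempty
          gcongr
      _ = 32 * #(A + A) * Q := by ring
  · obtain ⟨ξ, hξ, hξ1⟩ := exists_mem_add_one_notMem
      (mem_coe.2 (zero_mem_differenceQuotients hA)) hall
    rw [mem_coe] at hξ hξ1
    refine .inr ⟨?_, ?_⟩
    · have hcard := card_sq_le_card_of_notMem_differenceQuotients hξ1
      rw [ZMod.card] at hcard
      exact_mod_cast hcard
    obtain ⟨X, hX, Y, hY, hXcard, hYcard, hQ⟩ := h ξ hξ
    have hpivot : (#X : ℝ) ^ 2 * #Y ≤ 4 * #(X + Y) * #(X + ξ • Y) := by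
      exact_mod_cast card_sq_mul_card_le_of_add_one_notMem_differenceQuotients hX hY hξ1
    calc (#A : ℝ) ^ 3 = 8 * (((#A : ℝ) / 2) ^ 2 * (#A / 2)) := by ring
      _ ≤ 8 * ((#X : ℝ) ^ 2 * #Y) := by gcongr
      _ ≤ 8 * (4 * #(X + Y) * #(X + ξ • Y)) := mul_le_mul_of_nonneg_left hpivot (by norm_num)
      _ ≤ 8 * (4 * #(A + A) * Q) := by gcongr
      _ = 32 * #(A + A) * Q := by ring

lemma prime_le_or_card_pow_three_le_of_popular {A A₁ : Finset (ZMod p)} (hA₁ : A₁ ⊆ A)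
    (hne : A₁.Nonempty) (h0 : 0 ∉ A) {e : ZMod p} {N : ℕ} (hN : 0 < N)
    (h : ∀ a ∈ A₁, N ≤ #(a • A ∩ e • A)) {Q : ℝ}
    (hQ : (4 * #(A + A) / N) ^ 4 * #(A + A + (A + A)) ≤ Q) :
    (p : ℝ) ≤ 64 * Q ∨ ((#A₁ : ℝ) ^ 2 ≤ p ∧ (#A₁ : ℝ) ^ 3 ≤ 32 * #(A + A) * Q) := by
  obtain ⟨a, rfl⟩ | hA₁nt := hne.exists_eq_singleton_or_nontrivial
  · obtain ⟨X, -, Y, -, hX, hY, hle⟩ := exists_half_card_sub_smul_add_sub_smul_le hA₁ h0 hN h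
      (mem_singleton_self a) (mem_singleton_self a) (mem_singleton_self a) (mem_singleton_self a)
    rw [card_singleton, Nat.cast_one] at hX hY ⊢
    have hXY : (X.Nonempty ∧ Y.Nonempty) := by
      simp only [← card_pos, ← Nat.cast_pos (α := ℝ)]
      constructor <;> linarith
    have hQ1 : 1 ≤ Q := by
      have hpos := (hXY.1.smul_finset (a := a - a)).add (hXY.2.smul_finset (a := a - a))
      exact (Nat.one_le_cast.2 hpos.card_pos).trans (hle.trans hQ)
    have hp : (1 : ℝ) ≤ p := by exact_mod_cast (Fact.out : p.Prime).one_lt.le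
    have hA : (1 : ℝ) ≤ #(A + A) := by
      have hA := hne.mono hA₁
      exact_mod_cast (hA.add hA).card_pos
    exact .inr ⟨by rwa [one_pow], by nlinarith⟩
  · have hdich := prime_le_or_card_pow_three_le hA₁nt (Q := Q) fun ξ hξ => by
      obtain ⟨a, ha, b, hb, c, hc, d, hd, hcd, rfl⟩ := mem_differenceQuotients.1 hξ
      obtain ⟨X, hX, Y, hY, hXcard, hYcard, hle⟩ :=
        exists_half_card_sub_smul_add_sub_smul_le hA₁ h0 hN h ha hb hc hd
      have hcd := sub_ne_zero.2 hcd
      refine ⟨X, hX, Y, hY, hXcard, hYcard, le_trans (le_of_eq ?_) (hle.trans hQ)⟩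
      rw [← card_smul_finset₀ hcd (X + _), smul_add, smul_smul, mul_div_cancel₀ _ hcd]
    refine hdich.imp_right fun ⟨hp, hcube⟩ => ⟨hp, hcube.trans ?_⟩
    have hQ0 : 0 ≤ Q := le_trans (by positivity) hQ
    gcongr

lemma card_pow_ten_le_or_card_pow_fourteen_le {B : Finset (ZMod p)} (hB : B.Nonempty)
    (h0 : 0 ∉ B) {K : ℝ} (hK : (#(B + B) : ℝ) ≤ K)
    (hfour : (#(B + B + (B + B)) : ℝ) ≤ 8 * K ^ 3 / #B ^ 2) :
    (#B : ℝ) ^ 10 * p ≤ 2 ^ 17 * K ^ 7 * #(B * B) ^ 4 * harmonic #B ^ 4 ∨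
    (#B : ℝ) ^ 14 ≤ 2 ^ 16 * K ^ 8 * #(B * B) ^ 4 * harmonic #B ^ 4 * √p := by
  obtain ⟨e, N, hN, hcube⟩ := exists_card_pow_three_le_mul_card_popular hB h0
  set A₁ := {a ∈ B | N ≤ #(a • B ∩ e • B)}
  have hA₁B : A₁ ⊆ B := filter_subset _ _
  have hB0 : (0 : ℝ) < #B := by exact_mod_cast hB.card_pos
  have hN0 : (0 : ℝ) < N := by exact_mod_cast hN
  have hH0 : (0 : ℝ) < harmonic #B := by exact_mod_cast harmonic_pos hB.card_pos.ne'
  set H : ℝ := (harmonic #B : ℝ)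
  set P : ℝ := (#(B * B) : ℝ)
  have hK0 : 0 ≤ K := (Nat.cast_nonneg _).trans hK
  have hA₁ : A₁.Nonempty := by
    rw [nonempty_iff_ne_empty]
    intro h
    rw [h, card_empty, Nat.cast_zero, mul_zero, zero_mul, mul_zero] at hcube
    exact hcube.not_gt (by positivity)
  obtain ⟨Q, hQ⟩ : ∃ Q : ℝ, (4 * K / N) ^ 4 * (8 * K ^ 3 / #B ^ 2) = Q := ⟨_, rfl⟩
  have hQ0 : 0 ≤ Q := by rw [← hQ]; positivity
  have hQK : N ^ 4 * #B ^ 2 * Q = 2 ^ 11 * K ^ 7 := by rw [← hQ]; field_simp; ring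
  refine (prime_le_or_card_pow_three_le_of_popular hA₁B hA₁ h0 hN
    (fun a ha => (mem_filter.1 ha).2) (Q := Q) (by rw [← hQ]; gcongr)).imp
      (fun hp => ?_) fun ⟨hsq, hA₁cube⟩ => ?_
  · have hBsq : (#B : ℝ) ^ 2 ≤ P * (N * H) := by
      refine le_of_mul_le_mul_left (a := (#B : ℝ)) ?_ hB0
      calc (#B : ℝ) * #B ^ 2 = #B ^ 3 := by ring
        _ ≤ P * (N * #A₁ * H) := hcube
        _ ≤ P * (N * #B * H) := by gcongr
        _ = #B * (P * (N * H)) := by ring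
    calc (#B : ℝ) ^ 10 * p = (#B ^ 2) ^ 4 * #B ^ 2 * p := by ring
      _ ≤ (P * (N * H)) ^ 4 * #B ^ 2 * (64 * Q) := by gcongr
      _ = 64 * P ^ 4 * H ^ 4 * (N ^ 4 * #B ^ 2 * Q) := by ring
      _ = 2 ^ 17 * K ^ 7 * P ^ 4 * H ^ 4 := by rw [hQK]; ring
  · have hcubeK : (#A₁ : ℝ) ^ 3 ≤ 32 * K * Q := hA₁cube.trans (by gcongr)
    calc (#B : ℝ) ^ 14 = (#B ^ 3) ^ 4 * #B ^ 2 := by ring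
      _ ≤ (P * (N * #A₁ * H)) ^ 4 * #B ^ 2 := by gcongr
      _ = P ^ 4 * H ^ 4 * N ^ 4 * #B ^ 2 * #A₁ ^ 3 * #A₁ := by ring
      _ ≤ P ^ 4 * H ^ 4 * N ^ 4 * #B ^ 2 * (32 * K * Q) * √p := by
          have hsqrt : (#A₁ : ℝ) ≤ √p := Real.le_sqrt_of_sq_le hsq
          gcongr
      _ = 32 * P ^ 4 * H ^ 4 * K * √p * (N ^ 4 * #B ^ 2 * Q) := by ring
      _ = 2 ^ 16 * K ^ 8 * P ^ 4 * H ^ 4 * √p := by rw [hQK]; ring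

end Prime

lemma harmonic_card_le_three_mul_log {α : Type*} {A B : Finset α} (hB : B.Nonempty) (hBA : B ⊆ A)
    (hA : 2 ≤ #A) : (harmonic #B : ℝ) ≤ 3 * Real.log #A := by
  have hlog : Real.log #B ≤ Real.log #A :=
    Real.log_le_log (mod_cast hB.card_pos) (mod_cast card_le_card hBA)
  have hlog2 : Real.log 2 ≤ Real.log #A := Real.log_le_log two_pos (mod_cast hA)
  linarith [harmonic_le_one_add_log #B, Real.log_two_gt_d9]

lemma card_pow_fourteen_le_or_card_pow_ten_le {p : ℕ} [Fact p.Prime] {A : Finset (ZMod p)}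
    (hA : 2 ≤ #A) :
    (#A : ℝ) ^ 14 ≤
        4 ^ 14 * 2 ^ 17 * (3 * Real.log #A) ^ 4 * √p * (#(A + A) ^ 8 * #(A * A) ^ 4) ∨
    (#A : ℝ) ^ 10 * p ≤
        4 ^ 14 * 2 ^ 17 * (3 * Real.log #A) ^ 4 * (#(A + A) ^ 7 * #(A * A) ^ 4) := by
  obtain ⟨B, hBA, h0, hBcard, hfour⟩ := exists_quarter_zero_notMem_card_fourfold_add_le hA
  have hA0 : (0 : ℝ) < #A := by exact_mod_cast two_pos.trans_le hA
  have hAB : (#A : ℝ) ≤ 4 * #B := by linarith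
  have hB : B.Nonempty := card_pos.1 (by rify; linarith)
  have hH := harmonic_card_le_three_mul_log hB hBA hA
  have hH0 : (0 : ℝ) < harmonic #B := by exact_mod_cast harmonic_pos hB.card_pos.ne'
  have hsum : (#(B + B) : ℝ) ≤ #(A + A) := by gcongr
  rw [or_comm]
  refine (card_pow_ten_le_or_card_pow_fourteen_le hB h0 hsum hfour).imp (fun h => ?_) fun h => ?_
  · calc (#A : ℝ) ^ 10 * p ≤ (4 * (#B : ℝ)) ^ 10 * p := by gcongr
      _ = 4 ^ 10 * ((#B : ℝ) ^ 10 * p) := by ring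
      _ ≤ 4 ^ 14 * (2 ^ 17 * (#(A + A) : ℝ) ^ 7 * #(B * B) ^ 4 * harmonic #B ^ 4) :=
          mul_le_mul (by norm_num) h (by positivity) (by positivity)
      _ ≤ 4 ^ 14 * (2 ^ 17 * (#(A + A) : ℝ) ^ 7 * #(A * A) ^ 4 * (3 * Real.log #A) ^ 4) := by
          gcongr
      _ = 4 ^ 14 * 2 ^ 17 * (3 * Real.log #A) ^ 4 * (#(A + A) ^ 7 * #(A * A) ^ 4) := by ring
  · calc (#A : ℝ) ^ 14 ≤ (4 * (#B : ℝ)) ^ 14 := by gcongr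
      _ = 4 ^ 14 * (#B : ℝ) ^ 14 := by ring
      _ ≤ 4 ^ 14 * (2 ^ 16 * (#(A + A) : ℝ) ^ 8 * #(B * B) ^ 4 * harmonic #B ^ 4 * √p) := by
          gcongr
      _ ≤ 4 ^ 14 * (2 ^ 17 * (#(A + A) : ℝ) ^ 8 * #(A * A) ^ 4 * (3 * Real.log #A) ^ 4 * √p) := by
          gcongr <;> norm_num
      _ = 4 ^ 14 * 2 ^ 17 * (3 * Real.log #A) ^ 4 * √p * (#(A + A) ^ 8 * #(A * A) ^ 4) := by ring

theorem large_set_dichotomy_general :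
    ∃ c : ℝ, 0 < c ∧ ∀ (p : ℕ), p.Prime → ∀ A : Finset (ZMod p), 2 ≤ #A →
      (c * Real.log #A ^ (-4 : ℝ) * #A ^ 14 / √p ≤ #(A + A) ^ 8 * #(A * A) ^ 4) ∨
      (c * Real.log #A ^ (-4 : ℝ) * #A ^ 10 * p ≤ #(A + A) ^ 7 * #(A * A) ^ 4) := by
  refine ⟨(4 ^ 14 * 2 ^ 17 * 3 ^ 4)⁻¹, by positivity, fun p hp A hA => ?_⟩
  have : Fact p.Prime := ⟨hp⟩
  have hlog : 0 < Real.log #A := Real.log_pos (by exact_mod_cast hA)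
  have hsqrt : 0 < √(p : ℝ) := Real.sqrt_pos.2 (mod_cast hp.pos)
  rw [Real.rpow_neg hlog.le, Real.rpow_ofNat]
  refine (card_pow_fourteen_le_or_card_pow_ten_le hA).imp (fun h => ?_) fun h => ?_
  · rw [div_le_iff₀ hsqrt, ← mul_inv, inv_mul_le_iff₀ (by positivity)]
    linarith
  · rw [← mul_inv, mul_assoc, inv_mul_le_iff₀ (by positivity)]
    linarith

theorem large_set_dichotomy :
    ∃ c α : ℝ, 0 < c ∧ 0 ≤ α ∧ ∀ (p : ℕ), p.Prime → ∀ A : Finset (ZMod p),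
      Real.sqrt p ≤ (A.card : ℝ) →
      (c * (Real.log (A.card : ℝ)) ^ (-α) * (A.card : ℝ) ^ 14 / Real.sqrt p ≤
          ((A + A).card : ℝ) ^ 8 * ((A * A).card : ℝ) ^ 4) ∨
      (c * (Real.log (A.card : ℝ)) ^ (-α) * (A.card : ℝ) ^ 10 * (p : ℝ) ≤
          ((A + A).card : ℝ) ^ 7 * ((A * A).card : ℝ) ^ 4) := by
  obtain ⟨c, hc, h⟩ := large_set_dichotomy_general
  refine ⟨c, 4, hc, by norm_num, fun p hp A hA => h p hp A ?_⟩
  have hA1 : (1 : ℝ) < #A :=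
    ((Real.lt_sqrt zero_le_one).2 (by simpa using hp.one_lt)).trans_le hA
  exact_mod_cast hA1
end

section
/- For every finite A ⊆ F_p with 2 ≤ |A| ≤ p^{1/2}, the multiplicative energy satisfies E^×(A,A)⁴ ≤ C·|A|³·|A+A|⁸ for an absolute constant C, and likewise E^×(A,A)⁴ ≤ C·|A|³·|A−A|⁸. -/
open Finset Pointwise

/-- Multiplicative energy of `Y` and `Z`. -/
def paperMulEnergy {p : ℕ} (Y Z : Finset (ZMod p)) : ℕ :=
  ∑ x ∈ Y, ∑ y ∈ Y, ((Z.image (x * ·)) ∩ (Z.image (y * ·))).card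

/-!
Fix a sign `ε = ±1`, write `S = |A + εA|`, and let `X ⊆ A` have `|X + 3εA| ≪ S³ / |A|²`
(Plünnecke). For `y ∈ A` and `N > 0` let `t` be the set of `x ∈ A` with `|xA ∩ yX| ≥ N`.

Either the set `R(t)` of quotients of differences of `t` contains `0, 1, …, |t|² - 1`, which are
distinct, and averaging gives `ξ ∈ R(t)` with `|t + ξt| ≫ |t|²`, or some `ξ ∈ R(t)` has
`ξ + 1 ∉ R(t)`, so that `|Y + (ξ + 1)t| = |Y||t|` for all `Y ⊆ t`, and Plünnecke's inequality for
two different summands gives `|t|³ ≪ |t + εt||t ± ξt|`. In both cases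
`|t|³ ≪ S |(c - d)t + (a - b)t|` with `a, b, c, d ∈ t`. The last set lies in `cA - dA + aA - bA`,
and the overlaps of `aA`, `bA`, `cA`, `dA` with `yX` allow Ruzsa's triangle inequality to replace
each of these dilates by `±yX` at the cost of a factor `S / N`. Hence `|t|³N⁴ ≪ S⁸ / |A|²`.

This weak-type bound can be summed over `x` without losing a logarithm, and then over `y`, which
bounds the number of solutions of `xu = yv` in `A` with one variable in `X`. If moreover
`|A \ X| ≤ |A| / 4`, the solutions avoiding `X` are handled by induction.
-/

namespace SumProduct

section PluenneckePetridis

variable {G : Type*} [AddCommGroup G] [DecidableEq G] {A B B₁ B₂ : Finset G}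

theorem exists_subset_forall_card_add_add_le (hA : A.Nonempty) (B : Finset G) :
    ∃ X ⊆ A, X.Nonempty ∧ ∀ C : Finset G, #(C + X + B) * #A ≤ #(A + B) * #(C + X) := by
  have mem_candidates {Y : Finset G} (hYA : Y ⊆ A) (hY : Y.Nonempty) : Y ∈ A.powerset.erase ∅ :=
    mem_erase_of_ne_of_mem hY.ne_empty (mem_powerset.2 hYA)
  obtain ⟨X, hX, hmin⟩ := exists_min_image (A.powerset.erase ∅) (fun Y ↦ (#(Y + B) : ℚ) / #Y)
    ⟨A, mem_candidates subset_rfl hA⟩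
  rw [mem_erase, mem_powerset, ← nonempty_iff_ne_empty] at hX
  obtain ⟨hXne, hXA⟩ := hX
  have ratio_le : ∀ Y ⊆ A, #(X + B) * #Y ≤ #(Y + B) * #X := by
    intro Y hYA
    obtain rfl | hY := Y.eq_empty_or_nonempty
    · simp
    have hXpos : (0 : ℚ) < #X := mod_cast hXne.card_pos
    have hYpos : (0 : ℚ) < #Y := mod_cast hY.card_pos
    exact_mod_cast (div_le_div_iff₀ hXpos hYpos).1 (hmin Y (mem_candidates hYA hY))
  refine ⟨X, hXA, hXne, fun C ↦ Nat.le_of_mul_le_mul_right ?_ hXne.card_pos⟩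
  calc #(C + X + B) * #A * #X
    _ = #(C + X + B) * #X * #A := by ring
    _ ≤ #(X + B) * #(C + X) * #A := by
      gcongr ?_ * _
      exact pluennecke_petridis_inequality_add C fun Y hY ↦ ratio_le Y (hY.trans hXA)
    _ = #(X + B) * #A * #(C + X) := by ring
    _ ≤ #(A + B) * #X * #(C + X) := by gcongr ?_ * _; exact ratio_le A subset_rfl
    _ = #(A + B) * #(C + X) * #X := by ring

/-- The subset of `G × ℤ` with `m` copies of `B₁` and `n` copies of `B₂` on disjoint layers. It
turns weighted sums of cardinalities of sumsets in `G` into cardinalities of sumsets. -/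
noncomputable def layers (B₁ B₂ : Finset G) (m n : ℕ) : Finset (G × ℤ) :=
  B₁ ×ˢ Ico (0 : ℤ) m ∪ B₂ ×ˢ Ico (m : ℤ) (m + n)

theorem card_product_zero_add_layers (Y B₁ B₂ : Finset G) (m n : ℕ) :
    #(Y ×ˢ ({0} : Finset ℤ) + layers B₁ B₂ m n) = m * #(Y + B₁) + n * #(Y + B₂) := by
  have hdisj : Disjoint ((Y + B₁) ×ˢ Ico (0 : ℤ) m) ((Y + B₂) ×ˢ Ico (m : ℤ) (m + n)) :=
    disjoint_product.2 (.inr (Ico_disjoint_Ico_consecutive _ _ _))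
  rw [layers, add_union, product_add_product_comm, product_add_product_comm, singleton_zero,
    zero_add, zero_add, card_union_of_disjoint hdisj, card_product, card_product]
  simp [mul_comm]

theorem exists_subset_forall_weighted_card_add_add_le (hA : A.Nonempty) (B₁ B₂ : Finset G)
    (m n : ℕ) :
    ∃ X ⊆ A, X.Nonempty ∧ ∀ C : Finset G,
      (m * #(C + X + B₁) + n * #(C + X + B₂)) * #A ≤
        (m * #(A + B₁) + n * #(A + B₂)) * #(C + X) := by
  obtain ⟨X', hX'A, hX', h⟩ := exists_subset_forall_card_add_add_le
    (hA.product (singleton_nonempty (0 : ℤ))) (layers B₁ B₂ m n)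
  obtain ⟨X, hXA, rfl⟩ : ∃ X ⊆ A, X' = X ×ˢ ({0} : Finset ℤ) := by
    refine ⟨X'.image Prod.fst, image_subset_iff.2 fun x hx ↦ (mem_product.1 (hX'A hx)).1, ?_⟩
    refine (subset_product.trans (product_subset_product_right ?_)).antisymm ?_
    · exact image_subset_iff.2 fun x hx ↦ (mem_product.1 (hX'A hx)).2
    · rintro ⟨x, z⟩ h
      obtain ⟨hx, hz⟩ := mem_product.1 h
      obtain ⟨⟨x, w⟩, hxw, rfl⟩ := mem_image.1 hx
      obtain rfl : w = z := (mem_singleton.1 (mem_product.1 (hX'A hxw)).2).trans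
        (mem_singleton.1 hz).symm
      exact hxw
  refine ⟨X, hXA, hX'.fst, fun C ↦ ?_⟩
  simpa only [product_add_product_comm, singleton_add_singleton, add_zero,
    card_product_zero_add_layers, card_product, card_singleton, mul_one]
    using h (C ×ˢ ({0} : Finset ℤ))

theorem exists_subset_card_add_add_le (hA : A.Nonempty) (hB₁ : B₁.Nonempty) (hB₂ : B₂.Nonempty) :
    ∃ X ⊆ A, X.Nonempty ∧ #(X + B₁ + B₂) * #A ^ 2 ≤ 4 * #(A + B₁) * #(A + B₂) * #X := by
  set k₁ := #(A + B₁)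
  set k₂ := #(A + B₂)
  have hk : 0 < k₂ * k₁ := Nat.mul_pos (hA.add hB₂).card_pos (hA.add hB₁).card_pos
  obtain ⟨X, hXA, hX, h⟩ := exists_subset_forall_weighted_card_add_add_le hA B₁ B₂ k₂ k₁
  have h₁ : k₂ * #(X + B₁) * #A ≤ 2 * k₁ * k₂ * #X := by
    have := h 0
    rw [zero_add] at this
    linarith [Nat.zero_le (k₁ * #(X + B₂) * #A)]
  have h₂ : k₁ * #(X + B₁ + B₂) * #A ≤ 2 * k₁ * k₂ * #(X + B₁) := by
    have := h B₁
    rw [add_comm B₁ X] at this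
    linarith [Nat.zero_le (k₂ * #(X + B₁ + B₁) * #A)]
  refine ⟨X, hXA, hX, Nat.le_of_mul_le_mul_left ?_ hk⟩
  calc k₂ * k₁ * (#(X + B₁ + B₂) * #A ^ 2)
    _ = k₁ * #(X + B₁ + B₂) * #A * (k₂ * #A) := by ring
    _ ≤ 2 * k₁ * k₂ * #(X + B₁) * (k₂ * #A) := by gcongr
    _ = 2 * k₁ * k₂ * (k₂ * #(X + B₁) * #A) := by ring
    _ ≤ 2 * k₁ * k₂ * (2 * k₁ * k₂ * #X) := by gcongr
    _ = k₂ * k₁ * (4 * k₁ * k₂ * #X) := by ring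

theorem exists_subset_card_add_nsmul_le (hA : A.Nonempty) (B : Finset G) (n : ℕ) :
    ∃ X ⊆ A, X.Nonempty ∧ #(X + n • B) * #A ^ n ≤ #(A + B) ^ n * #X := by
  obtain ⟨X, hXA, hX, h⟩ := exists_subset_forall_card_add_add_le hA B
  refine ⟨X, hXA, hX, ?_⟩
  induction n with
  | zero => simp
  | succ n ih =>
    calc #(X + (n + 1) • B) * #A ^ (n + 1)
      _ = #(n • B + X + B) * #A * #A ^ n := by
        rw [succ_nsmul, ← add_assoc, add_comm X]
        ring
      _ ≤ #(A + B) * #(n • B + X) * #A ^ n := by gcongr ?_ * _; exact h (n • B)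
      _ = #(A + B) * (#(X + n • B) * #A ^ n) := by rw [add_comm X]; ring
      _ ≤ #(A + B) * (#(A + B) ^ n * #X) := by gcongr
      _ = #(A + B) ^ (n + 1) * #X := by ring

theorem exists_subset_card_sdiff_le_card_add_nsmul_le (A B : Finset G) (k n : ℕ) :
    ∃ X ⊆ A, k * #(A \ X) ≤ #A ∧ #(X + n • B) * #A ^ n ≤ k ^ n * #(A + B) ^ n * #X := by
  obtain ⟨X, hX, hmax⟩ := exists_max_image
    {X ∈ A.powerset | #(X + n • B) * #A ^ n ≤ k ^ n * #(A + B) ^ n * #X} card ⟨∅, by simp⟩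
  obtain ⟨hXA, hXle⟩ := by simpa only [mem_filter, mem_powerset] using hX
  refine ⟨X, hXA, ?_, hXle⟩
  by_contra! hlt
  have hne : (A \ X).Nonempty := card_pos.1 (Nat.pos_of_mul_pos_left (Nat.zero_lt_of_lt hlt))
  obtain ⟨Z, hZ, hZne, hZle⟩ := exists_subset_card_add_nsmul_le hne B n
  have hdisj : Disjoint X Z := disjoint_of_subset_right hZ disjoint_sdiff
  have hZle' : #(Z + n • B) * #A ^ n ≤ k ^ n * #(A + B) ^ n * #Z :=
    calc #(Z + n • B) * #A ^ n
      _ ≤ #(Z + n • B) * (k * #(A \ X)) ^ n := by gcongr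
      _ = k ^ n * (#(Z + n • B) * #(A \ X) ^ n) := by ring
      _ ≤ k ^ n * (#(A \ X + B) ^ n * #Z) := by gcongr
      _ ≤ k ^ n * (#(A + B) ^ n * #Z) := by gcongr; exact sdiff_subset
      _ = k ^ n * #(A + B) ^ n * #Z := by ring
  have hunion : #(X ∪ Z + n • B) * #A ^ n ≤ k ^ n * #(A + B) ^ n * #(X ∪ Z) :=
    calc #(X ∪ Z + n • B) * #A ^ n
      _ ≤ (#(X + n • B) + #(Z + n • B)) * #A ^ n := by
        rw [union_add]
        gcongr
        exact card_union_le _ _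
      _ ≤ k ^ n * #(A + B) ^ n * #X + k ^ n * #(A + B) ^ n * #Z := by
        rw [add_mul]
        gcongr
      _ = k ^ n * #(A + B) ^ n * #(X ∪ Z) := by rw [card_union_of_disjoint hdisj, mul_add]
  have hcard := hmax (X ∪ Z) <| mem_filter.2
    ⟨mem_powerset.2 (union_subset hXA (hZ.trans sdiff_subset)), hunion⟩
  rw [card_union_of_disjoint hdisj] at hcard
  have := hZne.card_pos
  lia

end PluenneckePetridis

section Dilates

variable {R M : Type*} [AddCommGroup M] [DecidableEq M]

theorem add_smul_finset_subset [Semiring R] [Module R M] (a b : R) (s : Finset M) :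
    (a + b) • s ⊆ a • s + b • s :=
  mod_cast Set.add_smul_subset a b (s : Set M)

theorem neg_one_smul_finset [Ring R] [Module R M] (s : Finset M) : (-1 : R) • s = -s := by
  ext
  simp

theorem card_sign_smul_add_mul_card_le [Ring R] [NoZeroDivisors R] [Module R M] {σ : R}
    (hσ : σ * σ = 1) (P Y W : Finset M) : #(σ • P + W) * #Y ≤ #(P + Y) * #(Y + W) := by
  obtain rfl | rfl := mul_self_eq_one_iff.1 hσ
  · simpa only [one_smul] using ruzsa_triangle_inequality_add_add_add P Y W
  · rw [neg_one_smul_finset, neg_add_eq_sub, add_comm Y W, mul_comm #(P + Y)]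
    exact ruzsa_triangle_inequality_sub_add_add W Y P

end Dilates

section Collisions

theorem card_sq_le_card_image_mul_card_filter_eq {α β : Type*} [DecidableEq β]
    (s : Finset α) (f : α → β) :
    #s ^ 2 ≤ #(s.image f) * #{q ∈ s ×ˢ s | f q.1 = f q.2} := by
  have card_eq : #s = ∑ w ∈ s.image f, #{x ∈ s | f x = w} :=
    card_eq_sum_card_image f s
  have card_filter_eq : #{q ∈ s ×ˢ s | f q.1 = f q.2} =
      ∑ w ∈ s.image f, #{x ∈ s | f x = w} ^ 2 := by
    rw [card_eq_sum_card_fiberwise (f := fun q ↦ f q.1) (t := s.image f)]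
    · refine sum_congr rfl fun w _ ↦ ?_
      rw [sq, ← card_product]
      congr 1
      grind
    · exact fun q hq ↦ mem_image_of_mem f (mem_product.1 (mem_filter.1 hq).1).1
  rw [card_filter_eq]
  nth_rw 1 [card_eq]
  exact sq_sum_le_card_mul_sum_sq
variable {R : Type*} [CommRing R] [IsDomain R] [DecidableEq R] {s t : Finset R}

theorem sum_card_collisions_le (S s t : Finset R) :
    ∑ ξ ∈ S, #{q ∈ (s ×ˢ t) ×ˢ (s ×ˢ t) | q.1.1 + ξ * q.1.2 = q.2.1 + ξ * q.2.2} ≤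
      #(s ×ˢ t) * #S + #(s ×ˢ t) ^ 2 := by
  set T := s ×ˢ t
  have card_coefficients_le : ∀ q ∈ T ×ˢ T,
      #{ξ ∈ S | q.1.1 + ξ * q.1.2 = q.2.1 + ξ * q.2.2} ≤ (if q.1 = q.2 then #S else 0) + 1 := by
    rintro ⟨⟨x, z⟩, x', z'⟩ -
    split_ifs with hq
    · exact (card_filter_le _ _).trans (Nat.le_succ _)
    · rw [zero_add, card_le_one]
      intro ξ hξ η hη
      obtain ⟨-, hξ⟩ := mem_filter.1 hξ
      obtain ⟨-, hη⟩ := mem_filter.1 hη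
      have hz : z ≠ z' := by
        rintro rfl
        exact hq (Prod.ext (add_right_cancel hξ) rfl)
      refine mul_right_cancel₀ (sub_ne_zero.2 hz) ?_
      linear_combination hξ - hη
  calc _ = ∑ q ∈ T ×ˢ T, #{ξ ∈ S | q.1.1 + ξ * q.1.2 = q.2.1 + ξ * q.2.2} := by
        simp only [card_filter]
        exact sum_comm
    _ ≤ ∑ q ∈ T ×ˢ T, ((if q.1 = q.2 then #S else 0) + 1) := sum_le_sum card_coefficients_le
    _ = #T * #S + #T ^ 2 := by
      rw [sum_add_distrib, sum_product]
      simp [sq]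

theorem exists_card_mul_card_le_two_mul_card_add_smul {S : Finset R} (hS : S.Nonempty)
    (hst : #s * #t ≤ #S) : ∃ ξ ∈ S, #s * #t ≤ 2 * #(s + ξ • t) := by
  set T := s ×ˢ t
  have hT : #T = #s * #t := card_product s t
  have hsum : ∑ ξ ∈ S, #{q ∈ T ×ˢ T | q.1.1 + ξ * q.1.2 = q.2.1 + ξ * q.2.2} ≤
      ∑ ξ ∈ S, 2 * #T :=
    calc _ ≤ #T * #S + #T ^ 2 := sum_card_collisions_le S s t
      _ ≤ #T * #S + #T * #S := by rw [sq]; gcongr; rwa [hT]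
      _ = ∑ ξ ∈ S, 2 * #T := by rw [sum_const, smul_eq_mul]; ring
  obtain ⟨ξ, hξS, hξ⟩ := exists_le_of_sum_le hS hsum
  refine ⟨ξ, hξS, ?_⟩
  obtain hT₀ | hTpos := Nat.eq_zero_or_pos #T
  · lia
  have himage : T.image (fun x ↦ x.1 + ξ * x.2) = s + ξ • t := by
    ext w
    simp only [T, mem_image, mem_product, mem_add, mem_smul_finset, smul_eq_mul, Prod.exists]
    grind
  have hcollisions := card_sq_le_card_image_mul_card_filter_eq T (fun x ↦ x.1 + ξ * x.2)
  rw [himage] at hcollisions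
  rw [← hT]
  refine Nat.le_of_mul_le_mul_right ?_ hTpos
  calc #T * #T = #T ^ 2 := (sq _).symm
    _ ≤ #(s + ξ • t) * (2 * #T) := hcollisions.trans (by gcongr)
    _ = 2 * #(s + ξ • t) * #T := by ring

end Collisions

section DiffQuotients

variable {K : Type*} [Field K] [DecidableEq K] {A t : Finset K} {ξ : K}

/-- The set `R(t)` of all quotients `(a - b) / (c - d)` with `a, b, c, d ∈ t` and `c ≠ d`. -/
def diffQuotients (t : Finset K) : Finset K := (t - t) / (t - t).erase 0

theorem mem_diffQuotients :
    ξ ∈ diffQuotients t ↔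
      ∃ a ∈ t, ∃ b ∈ t, ∃ c ∈ t, ∃ d ∈ t, c ≠ d ∧ ξ = (a - b) / (c - d) := by
  simp only [diffQuotients, mem_div, mem_sub, mem_erase]
  constructor
  · rintro ⟨_, ⟨a, ha, b, hb, rfl⟩, _, ⟨hcd, c, hc, d, hd, rfl⟩, rfl⟩
    exact ⟨a, ha, b, hb, c, hc, d, hd, sub_ne_zero.1 hcd, rfl⟩
  · rintro ⟨a, ha, b, hb, c, hc, d, hd, hcd, rfl⟩
    exact ⟨_, ⟨a, ha, b, hb, rfl⟩, _, ⟨sub_ne_zero.2 hcd, c, hc, d, hd, rfl⟩, rfl⟩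

theorem zero_mem_diffQuotients (ht : t.Nontrivial) : 0 ∈ diffQuotients t := by
  obtain ⟨a, ha, b, hb, hab⟩ := ht
  exact mem_diffQuotients.2 ⟨a, ha, a, ha, a, ha, b, hb, hab, by simp⟩

theorem sign_mul_mem_diffQuotients {σ : K} (hσ : σ * σ = 1) (hξ : ξ ∈ diffQuotients t) :
    σ * ξ ∈ diffQuotients t := by
  obtain rfl | rfl := mul_self_eq_one_iff.1 hσ
  · rwa [one_mul]
  · obtain ⟨a, ha, b, hb, c, hc, d, hd, hcd, rfl⟩ := mem_diffQuotients.1 hξ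
    refine mem_diffQuotients.2 ⟨b, hb, a, ha, c, hc, d, hd, hcd, ?_⟩
    rw [neg_one_mul, ← neg_div, neg_sub]

theorem natCast_mem_diffQuotients (ht : t.Nontrivial)
    (hR : ∀ ξ ∈ diffQuotients t, ξ + 1 ∈ diffQuotients t) (n : ℕ) :
    (n : K) ∈ diffQuotients t := by
  induction n with
  | zero => simpa using zero_mem_diffQuotients ht
  | succ n ih => simpa using hR n ih

theorem card_mul_card_le_card_add_smul_of_notMem_diffQuotients (hξ : ξ ∉ diffQuotients t)
    {X : Finset K} (hX : X ⊆ t) : #X * #t ≤ #(X + ξ • t) := by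
  rw [← card_product]
  refine card_le_card_of_injOn (fun q ↦ q.1 + ξ * q.2) ?_ ?_
  · rintro ⟨x, z⟩ hq
    obtain ⟨hx, hz⟩ := mem_product.1 hq
    exact add_mem_add hx (smul_mem_smul_finset hz)
  · rintro ⟨x, z⟩ hq ⟨x', z'⟩ hq' heq
    obtain ⟨hx, hz⟩ := mem_product.1 hq
    obtain ⟨hx', hz'⟩ := mem_product.1 hq'
    dsimp only at heq
    obtain rfl | hne := eq_or_ne z z'
    · exact Prod.ext (add_right_cancel heq) rfl
    · refine absurd (mem_diffQuotients.2
        ⟨x', hX hx', x, hX hx, z, hz, z', hz', hne, ?_⟩) hξ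
      rw [eq_div_iff (sub_ne_zero.2 hne)]
      linear_combination heq

theorem exists_mem_diffQuotients_card_sq_le (ht : t.Nontrivial)
    (hR : ∀ ξ ∈ diffQuotients t, ξ + 1 ∈ diffQuotients t)
    (hcast : Set.InjOn (Nat.cast : ℕ → K) (Set.Iio (#t ^ 2))) :
    ∃ ξ ∈ diffQuotients t, #t ^ 2 ≤ 2 * #(t + ξ • t) := by
  have hcard : #((range (#t ^ 2)).image (Nat.cast : ℕ → K)) = #t ^ 2 := by
    rw [card_image_of_injOn (by rwa [coe_range]), card_range]
  have hne : (range (#t ^ 2)).Nonempty :=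
    nonempty_range_iff.2 (pow_ne_zero 2 ht.nonempty.card_ne_zero)
  obtain ⟨ξ, hξ, hle⟩ := exists_card_mul_card_le_two_mul_card_add_smul
    (s := t) (t := t) (hne.image (Nat.cast : ℕ → K)) (by rw [hcard, sq])
  obtain ⟨n, -, rfl⟩ := mem_image.1 hξ
  exact ⟨n, natCast_mem_diffQuotients ht hR n, by rwa [sq]⟩

theorem card_pow_three_le_of_add_one_notMem_diffQuotients (ht : t.Nonempty)
    (hξ : ξ + 1 ∉ diffQuotients t) {ε : K} (hε : ε * ε = 1) :
    #t ^ 3 ≤ 4 * #(t + ε • t) * #(t + (ε * ξ) • t) := by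
  obtain ⟨X, hXt, hX, hle⟩ := exists_subset_card_add_add_le ht
    (ht.smul_finset (a := ε)) (ht.smul_finset (a := ε * ξ))
  have hnotMem : ε * (1 + ξ) ∉ diffQuotients t := fun h ↦ hξ <| by
    have := sign_mul_mem_diffQuotients hε h
    rwa [← mul_assoc, hε, one_mul, add_comm] at this
  have hsub : (ε * (1 + ξ)) • t ⊆ ε • t + (ε * ξ) • t := by
    rw [mul_add, mul_one]
    exact add_smul_finset_subset _ _ _
  refine Nat.le_of_mul_le_mul_right ?_ hX.card_pos
  calc #t ^ 3 * #X = #X * #t * #t ^ 2 := by ring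
    _ ≤ #(X + (ε * (1 + ξ)) • t) * #t ^ 2 := by
      gcongr
      exact card_mul_card_le_card_add_smul_of_notMem_diffQuotients hnotMem hXt
    _ ≤ #(X + ε • t + (ε * ξ) • t) * #t ^ 2 := by
      rw [add_assoc]
      gcongr
    _ ≤ 4 * #(t + ε • t) * #(t + (ε * ξ) • t) * #X := hle

theorem exists_mem_diffQuotients_card_pow_three_le (ht : t.Nontrivial)
    (hcast : Set.InjOn (Nat.cast : ℕ → K) (Set.Iio (#t ^ 2))) {ε : K} (hε : ε * ε = 1) :
    ∃ ξ ∈ diffQuotients t, #t ^ 3 ≤ 4 * #(t + ε • t) * #(t + ξ • t) := by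
  by_cases hR : ∀ ξ ∈ diffQuotients t, ξ + 1 ∈ diffQuotients t
  · obtain ⟨ξ, hξ, hle⟩ := exists_mem_diffQuotients_card_sq_le ht hR hcast
    refine ⟨ξ, hξ, ?_⟩
    calc #t ^ 3 = #t * #t ^ 2 := by ring
      _ ≤ #(t + ε • t) * (2 * #(t + ξ • t)) :=
        Nat.mul_le_mul (card_le_card_add_right ht.nonempty.smul_finset) hle
      _ ≤ 4 * #(t + ε • t) * #(t + ξ • t) := by
        linarith [Nat.zero_le (#(t + ε • t) * #(t + ξ • t))]
  · push Not at hR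
    obtain ⟨ξ, hξ, hξ₁⟩ := hR
    exact ⟨ε * ξ, sign_mul_mem_diffQuotients hε hξ,
      card_pow_three_le_of_add_one_notMem_diffQuotients ht.nonempty hξ₁ hε⟩

theorem exists_card_add_smul_le_of_mem_diffQuotients (hξ : ξ ∈ diffQuotients t) (htA : t ⊆ A) :
    ∃ a ∈ t, ∃ b ∈ t, ∃ c ∈ t, ∃ d ∈ t,
      #(t + ξ • t) ≤ #(c • A + (-d) • A + a • A + (-b) • A) := by
  have sub_smul_subset (a b : K) : (a - b) • t ⊆ a • A + (-b) • A := by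
    rw [sub_eq_add_neg]
    exact (add_smul_finset_subset _ _ _).trans (by gcongr)
  obtain ⟨a, ha, b, hb, c, hc, d, hd, hcd, rfl⟩ := mem_diffQuotients.1 hξ
  refine ⟨a, ha, b, hb, c, hc, d, hd, ?_⟩
  calc #(t + ((a - b) / (c - d)) • t)
    _ = #((c - d) • (t + ((a - b) / (c - d)) • t)) :=
      (card_smul_finset₀ (sub_ne_zero.2 hcd) _).symm
    _ = #((c - d) • t + (a - b) • t) := by
      rw [smul_add, smul_smul, mul_div_cancel₀ _ (sub_ne_zero.2 hcd)]
    _ ≤ #(c • A + (-d) • A + a • A + (-b) • A) := by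
      rw [add_assoc _ (a • A)]
      exact card_le_card (add_subset_add (sub_smul_subset c d) (sub_smul_subset a b))

end DiffQuotients

section WeakType

variable {K : Type*} [Field K] [DecidableEq K] {A X t : Finset K} {y : K} {N : ℕ}

theorem card_sign_mul_smul_add_mul_card_le {U : Finset K} {x ε σ τ : K} (hU : U ⊆ x • A)
    (hε : ε * ε = 1) (hσ : σ * σ = 1) (hτ : τ * τ = 1) (W : Finset K) :
    #((σ * x) • A + W) * #U ≤ #(A + ε • A) * #(τ • U + W) := by
  have hsign : σ * τ * ε * (σ * τ * ε) = 1 := by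
    linear_combination τ * τ * ε * ε * hσ + ε * ε * hτ + hε
  have hdilate : (σ * τ * ε) • (τ * ε * x) • A = (σ * x) • A := by
    rw [smul_smul]
    congr 1
    linear_combination σ * x * ε * ε * hτ + σ * x * hε
  have hsum : (τ * ε * x) • A + τ • x • A = (τ * x) • (A + ε • A) := by
    rw [smul_add, smul_smul, smul_smul, add_comm, mul_right_comm τ x]
  calc #((σ * x) • A + W) * #U
    _ = #((σ * τ * ε) • (τ * ε * x) • A + W) * #(τ • U) := by
      rw [hdilate, card_smul_finset₀ (left_ne_zero_of_mul_eq_one hτ)]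
    _ ≤ #((τ * ε * x) • A + τ • U) * #(τ • U + W) := card_sign_smul_add_mul_card_le hsign _ _ _
    _ ≤ #((τ * ε * x) • A + τ • x • A) * #(τ • U + W) := by gcongr
    _ = #((τ * x) • (A + ε • A)) * #(τ • U + W) := by rw [hsum]
    _ ≤ #(A + ε • A) * #(τ • U + W) := Nat.mul_le_mul_right _ card_image_le

theorem card_sign_mul_smul_add_mul_le {x ε σ τ : K} (hN : N ≤ #(x • A ∩ y • X))
    (hε : ε * ε = 1) (hσ : σ * σ = 1) (hτ : τ * τ = 1) (W : Finset K) :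
    #((σ * x) • A + W) * N ≤ #(A + ε • A) * #(W + τ • y • X) :=
  calc #((σ * x) • A + W) * N ≤ #((σ * x) • A + W) * #(x • A ∩ y • X) := by gcongr
    _ ≤ #(A + ε • A) * #(τ • (x • A ∩ y • X) + W) :=
      card_sign_mul_smul_add_mul_card_le inter_subset_left hε hσ hτ W
    _ ≤ #(A + ε • A) * #(W + τ • y • X) := by
      rw [add_comm W]
      gcongr
      exact inter_subset_right

theorem pow_four_mul_card_add_smul_le (htA : t ⊆ A) (hN : ∀ x ∈ t, N ≤ #(x • A ∩ y • X))
    {ξ ε : K} (hξ : ξ ∈ diffQuotients t) (hε : ε * ε = 1) :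
    N ^ 4 * #(t + ξ • t) ≤ #(A + ε • A) ^ 4 * #(X + 3 • ε • X) := by
  obtain ⟨a, ha, b, hb, c, hc, d, hd, hle⟩ :=
    exists_card_add_smul_le_of_mem_diffQuotients hξ htA
  set S := #(A + ε • A)
  have exchange {σ τ x : K} (hσ : σ * σ = 1) (hτ : τ * τ = 1) (hx : x ∈ t) (W : Finset K) :
      #((σ * x) • A + W) * N ≤ S * #(W + τ • y • X) :=
    card_sign_mul_smul_add_mul_le (hN x hx) hε hσ hτ W
  have one_sign : (1 : K) * 1 = 1 := mul_one 1
  have neg_sign : (-1 : K) * -1 = 1 := by simp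
  have hc' := exchange one_sign one_sign hc ((-d) • A + (a • A + (-b) • A))
  have hd' := exchange neg_sign hε hd (a • A + ((-b) • A + y • X))
  have ha' := exchange one_sign hε ha ((-b) • A + (y • X + ε • y • X))
  have hb' := exchange neg_sign hε hb (y • X + (ε • y • X + ε • y • X))
  have hdilate : y • X + (ε • y • X + (ε • y • X + ε • y • X)) = y • (X + 3 • ε • X) := by
    rw [smul_comm ε y, succ_nsmul', two_nsmul]
    simp only [smul_add]
  simp only [one_mul, neg_one_mul, one_smul, add_assoc] at hle hc' hd' ha' hb'
  rw [hdilate] at hb'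
  set W₀ := c • A + ((-d) • A + (a • A + (-b) • A))
  set W₁ := (-d) • A + (a • A + ((-b) • A + y • X))
  set W₂ := a • A + ((-b) • A + (y • X + ε • y • X))
  set W₃ := (-b) • A + (y • X + (ε • y • X + ε • y • X))
  calc N ^ 4 * #(t + ξ • t)
    _ ≤ N ^ 4 * #W₀ := by gcongr
    _ = N ^ 3 * (#W₀ * N) := by ring
    _ ≤ N ^ 3 * (S * #W₁) := by gcongr
    _ = N ^ 2 * S * (#W₁ * N) := by ring
    _ ≤ N ^ 2 * S * (S * #W₂) := by gcongr
    _ = N * S ^ 2 * (#W₂ * N) := by ring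
    _ ≤ N * S ^ 2 * (S * #W₃) := by gcongr
    _ = S ^ 3 * (#W₃ * N) := by ring
    _ ≤ S ^ 3 * (S * #(y • (X + 3 • ε • X))) := by gcongr
    _ ≤ S ^ 3 * (S * #(X + 3 • ε • X)) :=
      Nat.mul_le_mul_left _ (Nat.mul_le_mul_left _ card_image_le)
    _ = S ^ 4 * #(X + 3 • ε • X) := by ring

theorem card_pow_three_mul_pow_four_mul_card_sq_le {ε : K} (hε : ε * ε = 1)
    (hcast : Set.InjOn (Nat.cast : ℕ → K) (Set.Iio (#A ^ 2))) (hXA : X ⊆ A)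
    (hX : #(X + 3 • ε • A) * #A ^ 2 ≤ 64 * #(A + ε • A) ^ 3) (htA : t ⊆ A) (ht : t.Nonempty)
    (hN : ∀ x ∈ t, N ≤ #(x • A ∩ y • X)) :
    #t ^ 3 * N ^ 4 * #A ^ 2 ≤ 256 * #(A + ε • A) ^ 8 := by
  set S := #(A + ε • A) with hS
  obtain ⟨x, rfl⟩ | hnontrivial := ht.exists_eq_singleton_or_nontrivial
  · have hA : A.Nonempty := ht.mono htA
    have hAS : #A ≤ S := card_le_card_add_right (hA.smul_finset (a := ε))
    have hNA : N ≤ #A :=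
      (hN x (mem_singleton_self x)).trans ((card_le_card inter_subset_left).trans card_image_le)
    calc #{x} ^ 3 * N ^ 4 * #A ^ 2 ≤ 1 ^ 3 * #A ^ 4 * #A ^ 2 := by rw [card_singleton]; gcongr
      _ = #A ^ 6 := by ring
      _ ≤ #A ^ 8 := Nat.pow_le_pow_right hA.card_pos (by norm_num)
      _ ≤ S ^ 8 := by gcongr
      _ ≤ 256 * S ^ 8 := Nat.le_mul_of_pos_left _ (by norm_num)
  · obtain ⟨ξ, hξ, hle⟩ := exists_mem_diffQuotients_card_pow_three_le hnontrivial
      (hcast.mono (Set.Iio_subset_Iio (by gcongr))) hε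
    calc #t ^ 3 * N ^ 4 * #A ^ 2
      _ ≤ 4 * #(t + ε • t) * #(t + ξ • t) * N ^ 4 * #A ^ 2 := by gcongr
      _ ≤ 4 * S * #(t + ξ • t) * N ^ 4 * #A ^ 2 := by rw [hS]; gcongr
      _ = 4 * S * (N ^ 4 * #(t + ξ • t)) * #A ^ 2 := by ring
      _ ≤ 4 * S * (S ^ 4 * #(X + 3 • ε • X)) * #A ^ 2 := by
        gcongr 4 * S * ?_ * _
        exact pow_four_mul_card_add_smul_le htA hN hξ hε
      _ ≤ 4 * S * (S ^ 4 * #(X + 3 • ε • A)) * #A ^ 2 := by gcongr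
      _ = 4 * S ^ 5 * (#(X + 3 • ε • A) * #A ^ 2) := by ring
      _ ≤ 4 * S ^ 5 * (64 * S ^ 3) := by gcongr
      _ = 256 * S ^ 8 := by ring

end WeakType

section WeakTypeSummation

theorem sqrt_sqrt_pow_four {x : ℝ} (hx : 0 ≤ x) : √√x ^ 4 = x := by
  rw [show √√x ^ 4 = (√√x ^ 2) ^ 2 by ring, Real.sq_sqrt (by positivity), Real.sq_sqrt hx]

theorem pow_four_sub_pow_four_le {u v : ℝ} (hu : 0 ≤ u) (hv : 0 ≤ v) :
    u ^ 4 - v ^ 4 ≤ 4 * u ^ 3 * (u - v) := by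
  have : 0 ≤ (u - v) ^ 2 * (3 * u ^ 2 + 2 * u * v + v ^ 2) := by positivity
  linarith

theorem sum_le_mul_sqrt_sqrt_card {α : Type*} (f : α → ℕ) {l : ℝ} (hl : 0 ≤ l) (s : Finset α)
    (h : ∀ t ⊆ s, t.Nonempty → ∀ N : ℕ, (∀ x ∈ t, N ≤ f x) → √√(#t : ℝ) ^ 3 * N ≤ l) :
    ((∑ x ∈ s, f x : ℕ) : ℝ) ≤ 4 * l * √√(#s : ℝ) := by
  classical
  induction s using Finset.eraseInduction with
  | H s ih =>
  obtain rfl | hs := s.eq_empty_or_nonempty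
  · simp
  -- By `hfx` below, the least value of `f` is at most `l * #s ^ (-3 / 4)`, which is comparable to
  -- the increment of `l * #s ^ (1 / 4)`: hence no logarithm.
  obtain ⟨x, hx, hmin⟩ := exists_min_image s f hs
  have herase := ih x hx fun t ht ↦ h t (ht.trans (erase_subset _ _))
  have hfx := h s subset_rfl hs (f x) hmin
  set u := √√(#s : ℝ)
  set v := √√(#(s.erase x) : ℝ)
  have hu : 0 < u := Real.sqrt_pos.2 (Real.sqrt_pos.2 (mod_cast hs.card_pos))
  have hincrement : 1 ≤ 4 * u ^ 3 * (u - v) :=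
    calc (1 : ℝ) = u ^ 4 - v ^ 4 := by
          rw [sqrt_sqrt_pow_four (by positivity), sqrt_sqrt_pow_four (by positivity),
            ← card_erase_add_one hx, Nat.cast_add_one, add_sub_cancel_left]
      _ ≤ 4 * u ^ 3 * (u - v) := pow_four_sub_pow_four_le hu.le (Real.sqrt_nonneg _)
  have hfx' : (f x : ℝ) ≤ 4 * l * (u - v) := by
    refine le_of_mul_le_mul_left ?_ (pow_pos hu 3)
    calc u ^ 3 * f x ≤ l * 1 := by rwa [mul_one]
      _ ≤ l * (4 * u ^ 3 * (u - v)) := by gcongr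
      _ = u ^ 3 * (4 * l * (u - v)) := by ring
  rw [← add_sum_erase s f hx, Nat.cast_add]
  linarith

theorem sum_pow_four_le_of_forall_subset {α : Type*} (f : α → ℕ) {M : ℝ} (hM : 0 ≤ M)
    (s : Finset α)
    (h : ∀ t ⊆ s, t.Nonempty → ∀ N : ℕ, (∀ x ∈ t, N ≤ f x) → (#t : ℝ) ^ 3 * N ^ 4 ≤ M) :
    ((∑ x ∈ s, f x : ℕ) : ℝ) ^ 4 ≤ 256 * M * #s := by
  have hroot : ∀ t ⊆ s, t.Nonempty → ∀ N : ℕ, (∀ x ∈ t, N ≤ f x) →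
      √√(#t : ℝ) ^ 3 * N ≤ √√M := by
    intro t hts ht N hN
    refine le_of_pow_le_pow_left₀ four_ne_zero (by positivity) ?_
    calc (√√(#t : ℝ) ^ 3 * N) ^ 4 = (√√(#t : ℝ) ^ 4) ^ 3 * N ^ 4 := by ring
      _ = (#t : ℝ) ^ 3 * N ^ 4 := by rw [sqrt_sqrt_pow_four (by positivity)]
      _ ≤ √√M ^ 4 := by rw [sqrt_sqrt_pow_four hM]; exact h t hts ht N hN
  calc ((∑ x ∈ s, f x : ℕ) : ℝ) ^ 4 ≤ (4 * √√M * √√(#s : ℝ)) ^ 4 := by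
        gcongr
        exact sum_le_mul_sqrt_sqrt_card f (by positivity) s hroot
    _ = 256 * √√M ^ 4 * √√(#s : ℝ) ^ 4 := by ring
    _ = 256 * M * #s := by rw [sqrt_sqrt_pow_four hM, sqrt_sqrt_pow_four (by positivity)]

end WeakTypeSummation

section MulQuadruples

open scoped Combinatorics.Additive

variable {M : Type*} [DecidableEq M]

/-- The quadruples `((x, y), u, v) ∈ (P × Q) × U × V` with `x * u = y * v`. The nesting is that of
`Finset.mulEnergy`, so that `Eₘ[A]` is by definition the cardinality of `mulQuadruples A A A A`. -/
def mulQuadruples [Mul M] (P Q U V : Finset M) : Finset ((M × M) × M × M) :=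
  {z ∈ (P ×ˢ Q) ×ˢ U ×ˢ V | z.1.1 * z.2.1 = z.1.2 * z.2.2}

theorem mem_mulQuadruples [Mul M] {P Q U V : Finset M} {x y u v : M} :
    ((x, y), u, v) ∈ mulQuadruples P Q U V ↔
      ((x ∈ P ∧ y ∈ Q) ∧ u ∈ U ∧ v ∈ V) ∧ x * u = y * v := by
  simp only [mulQuadruples, mem_filter, mem_product]

theorem card_mulQuadruples_swap [Mul M] (P Q U V : Finset M) :
    #(mulQuadruples P Q U V) = #(mulQuadruples Q P V U) :=
  card_equiv ((Equiv.prodComm M M).prodCongr (Equiv.prodComm M M)) fun ⟨⟨x, y⟩, u, v⟩ ↦ by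
    simp only [Equiv.prodCongr_apply, Equiv.prodComm_apply, Prod.map, Prod.swap,
      mem_mulQuadruples, eq_comm (a := x * u)]
    tauto

theorem card_mulQuadruples_comm [CommMagma M] (P Q U V : Finset M) :
    #(mulQuadruples P Q U V) = #(mulQuadruples U V P Q) :=
  card_equiv (Equiv.prodComm (M × M) (M × M)) fun ⟨⟨x, y⟩, u, v⟩ ↦ by
    simp only [Equiv.prodComm_apply, Prod.swap, mem_mulQuadruples, mul_comm x, mul_comm y]
    tauto

theorem mulEnergy_le_four_mul_card_mulQuadruples_add [CommMagma M] (A X : Finset M) :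
    Eₘ[A] ≤ 4 * #(mulQuadruples A A A X) + Eₘ[A \ X] := by
  have hsub : mulQuadruples A A A A ⊆
      mulQuadruples A A A X ∪ mulQuadruples A A X A ∪ mulQuadruples A X A A ∪
        mulQuadruples X A A A ∪ mulQuadruples (A \ X) (A \ X) (A \ X) (A \ X) := by
    rintro ⟨⟨x, y⟩, u, v⟩ h
    simp only [mem_union, mem_mulQuadruples, mem_sdiff] at h ⊢
    tauto
  have h₃ : #(mulQuadruples A A X A) = #(mulQuadruples A A A X) := card_mulQuadruples_swap ..
  have h₂ : #(mulQuadruples A X A A) = #(mulQuadruples A A A X) := card_mulQuadruples_comm ..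
  have h₁ : #(mulQuadruples X A A A) = #(mulQuadruples A A A X) :=
    (card_mulQuadruples_comm ..).trans h₃
  calc Eₘ[A] ≤ _ := card_le_card hsub
    _ ≤ #(mulQuadruples A A A X) + #(mulQuadruples A A X A) + #(mulQuadruples A X A A) +
        #(mulQuadruples X A A A) + Eₘ[A \ X] := by
      repeat refine (card_union_le _ _).trans (Nat.add_le_add_right ?_ _)
      rfl
    _ = 4 * #(mulQuadruples A A A X) + Eₘ[A \ X] := by rw [h₁, h₂, h₃]; ring

theorem card_mulQuadruples_eq_sum [Mul M] (P Q U V : Finset M) :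
    #(mulQuadruples P Q U V) =
      ∑ x ∈ P, ∑ y ∈ Q, #{z ∈ U ×ˢ V | x * z.1 = y * z.2} := by
  simp only [mulQuadruples, card_filter, sum_product]

theorem sum_card_smul_inter_smul_le [Mul M] (P Q U V : Finset M) :
    ∑ x ∈ P, ∑ y ∈ Q, #(x • U ∩ y • V) ≤ #(mulQuadruples P Q U V) := by
  rw [card_mulQuadruples_eq_sum]
  refine sum_le_sum fun x _ ↦ sum_le_sum fun y _ ↦ ?_
  refine card_le_card_of_surjOn (fun z ↦ x * z.1) fun w hw ↦ ?_
  obtain ⟨hwU, hwV⟩ := mem_inter.1 hw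
  obtain ⟨u, hu, rfl⟩ := mem_smul_finset.1 hwU
  obtain ⟨v, hv, huv⟩ := mem_smul_finset.1 hwV
  exact ⟨(u, v), mem_filter.2 ⟨mem_product.2 ⟨hu, hv⟩, huv.symm⟩, rfl⟩

theorem card_mulQuadruples_le_sum [MulZeroClass M] [IsLeftCancelMulZero M] {P Q : Finset M}
    (hP : 0 ∉ P) (hQ : 0 ∉ Q) (U V : Finset M) :
    #(mulQuadruples P Q U V) ≤ ∑ x ∈ P, ∑ y ∈ Q, #(x • U ∩ y • V) := by
  rw [card_mulQuadruples_eq_sum]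
  refine sum_le_sum fun x hx ↦ sum_le_sum fun y hy ↦ ?_
  refine card_le_card_of_injOn (fun z ↦ x * z.1) ?_ ?_
  · rintro ⟨u, v⟩ huv
    obtain ⟨hmem, heq⟩ := mem_filter.1 huv
    obtain ⟨hu, hv⟩ := mem_product.1 hmem
    have hxv : x * u ∈ y • V := (show x * u = y * v from heq) ▸ smul_mem_smul_finset hv
    exact mem_inter.2 ⟨smul_mem_smul_finset hu, hxv⟩
  · rintro ⟨u, v⟩ huv ⟨u', v'⟩ huv' heq
    obtain rfl : u = u' := mul_left_cancel₀ (ne_of_mem_of_not_mem hx hP) heq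
    have hv : y * v = y * v' := (mem_filter.1 huv).2.symm.trans (mem_filter.1 huv').2
    rw [mul_left_cancel₀ (ne_of_mem_of_not_mem hy hQ) hv]

theorem card_mulQuadruples_zero_le [MulZeroClass M] [NoZeroDivisors M] (A : Finset M) :
    #(mulQuadruples A A A {0}) ≤ 2 * #A ^ 2 := by
  have hsub : mulQuadruples A A A {0} ⊆
      ({0} ×ˢ A) ×ˢ A ×ˢ {0} ∪ (A ×ˢ A) ×ˢ {0} ×ˢ {0} := by
    rintro ⟨⟨x, y⟩, u, v⟩ h
    obtain ⟨⟨⟨hx, hy⟩, hu, hv⟩, heq⟩ := mem_mulQuadruples.1 h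
    obtain rfl := mem_singleton.1 hv
    rw [mul_zero, mul_eq_zero] at heq
    simp only [mem_union, mem_product, mem_singleton]
    tauto
  calc #(mulQuadruples A A A {0}) ≤ _ := (card_le_card hsub).trans (card_union_le _ _)
    _ = 2 * #A ^ 2 := by simp only [card_product, card_singleton]; ring

end MulQuadruples

section EnergyBound

open scoped Combinatorics.Additive

variable {K : Type*} [Field K] [DecidableEq K] {A X : Finset K}

theorem sum_card_smul_inter_smul_pow_four_le {ε : K} (hε : ε * ε = 1)
    (hcast : Set.InjOn (Nat.cast : ℕ → K) (Set.Iio (#A ^ 2))) (hXA : X ⊆ A)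
    (hX : #(X + 3 • ε • A) * #A ^ 2 ≤ 64 * #(A + ε • A) ^ 3) (y : K) :
    (∑ x ∈ A, #(x • A ∩ y • X)) ^ 4 * #A ≤ 2 ^ 16 * #(A + ε • A) ^ 8 := by
  obtain rfl | hA := A.eq_empty_or_nonempty
  · simp
  have : (0 : ℝ) < #A := mod_cast hA.card_pos
  have hsum := sum_pow_four_le_of_forall_subset (fun x ↦ #(x • A ∩ y • X))
    (M := 256 * #(A + ε • A) ^ 8 / #A ^ 2) (by positivity) A fun t htA ht N hN ↦ by
      rw [le_div_iff₀ (by positivity)]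
      exact_mod_cast card_pow_three_mul_pow_four_mul_card_sq_le hε hcast hXA hX htA ht hN
  have hmul : ((∑ x ∈ A, #(x • A ∩ y • X) : ℕ) : ℝ) ^ 4 * #A ≤ 2 ^ 16 * #(A + ε • A) ^ 8 :=
    calc _ ≤ 256 * (256 * #(A + ε • A) ^ 8 / #A ^ 2) * #A * (#A : ℝ) := by gcongr
      _ = 2 ^ 16 * #(A + ε • A) ^ 8 := by field_simp; ring
  exact_mod_cast hmul

theorem card_mulQuadruples_pow_four_le {ε : K} (hε : ε * ε = 1) (h₀ : 0 ∉ A)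
    (hcast : Set.InjOn (Nat.cast : ℕ → K) (Set.Iio (#A ^ 2))) (hXA : X ⊆ A)
    (hX : #(X + 3 • ε • A) * #A ^ 2 ≤ 64 * #(A + ε • A) ^ 3) :
    #(mulQuadruples A A A X) ^ 4 ≤ 2 ^ 16 * #A ^ 3 * #(A + ε • A) ^ 8 := by
  obtain rfl | hA := A.eq_empty_or_nonempty
  · simp [mulQuadruples]
  obtain ⟨y, -, hmax⟩ := exists_max_image A (fun y ↦ ∑ x ∈ A, #(x • A ∩ y • X)) hA
  have hle : #(mulQuadruples A A A X) ≤ #A * ∑ x ∈ A, #(x • A ∩ y • X) :=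
    calc #(mulQuadruples A A A X) ≤ ∑ y ∈ A, ∑ x ∈ A, #(x • A ∩ y • X) := by
          rw [sum_comm]
          exact card_mulQuadruples_le_sum h₀ h₀ A X
      _ ≤ #A * ∑ x ∈ A, #(x • A ∩ y • X) := sum_le_card_nsmul _ _ _ hmax
  calc #(mulQuadruples A A A X) ^ 4
    _ ≤ (#A * ∑ x ∈ A, #(x • A ∩ y • X)) ^ 4 := by gcongr
    _ = #A ^ 3 * ((∑ x ∈ A, #(x • A ∩ y • X)) ^ 4 * #A) := by ring
    _ ≤ #A ^ 3 * (2 ^ 16 * #(A + ε • A) ^ 8) := by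
      gcongr #A ^ 3 * ?_
      exact sum_card_smul_inter_smul_pow_four_le hε hcast hXA hX y
    _ = 2 ^ 16 * #A ^ 3 * #(A + ε • A) ^ 8 := by ring

theorem mulEnergy_pow_four_le_of_zero_notMem {ε : K} (hε : ε * ε = 1) (h₀ : 0 ∉ A)
    (hcast : Set.InjOn (Nat.cast : ℕ → K) (Set.Iio (#A ^ 2))) :
    Eₘ[A] ^ 4 ≤ 2 ^ 28 * #A ^ 3 * #(A + ε • A) ^ 8 := by
  induction A using Finset.strongInduction with
  | H A ih =>
  obtain rfl | hA := A.eq_empty_or_nonempty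
  · simp
  obtain ⟨X, hXA, hsdiff, hXle⟩ :=
    exists_subset_card_sdiff_le_card_add_nsmul_le A (ε • A) 4 3
  set S := #(A + ε • A) with hS
  have hX : #(X + 3 • ε • A) * #A ^ 2 ≤ 64 * S ^ 3 := by
    refine Nat.le_of_mul_le_mul_right ?_ hA.card_pos
    calc #(X + 3 • ε • A) * #A ^ 2 * #A = #(X + 3 • ε • A) * #A ^ 3 := by ring
      _ ≤ 4 ^ 3 * S ^ 3 * #X := hXle
      _ ≤ 64 * S ^ 3 * #A := by norm_num; gcongr
  have hquadruples := card_mulQuadruples_pow_four_le hε h₀ hcast hXA hX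
  have hssub : A \ X ⊂ A := by
    refine sdiff_subset.ssubset_of_ne fun h ↦ ?_
    rw [h] at hsdiff
    have := hA.card_pos
    lia
  have hrest : Eₘ[A \ X] ^ 4 ≤ 2 ^ 22 * #A ^ 3 * S ^ 8 :=
    calc Eₘ[A \ X] ^ 4
      _ ≤ 2 ^ 28 * #(A \ X) ^ 3 * #(A \ X + ε • (A \ X)) ^ 8 :=
        ih _ hssub (fun h ↦ h₀ (sdiff_subset h))
          (hcast.mono (Set.Iio_subset_Iio (by gcongr)))
      _ ≤ 2 ^ 28 * #(A \ X) ^ 3 * S ^ 8 := by rw [hS]; gcongr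
      _ = 2 ^ 22 * (4 * #(A \ X)) ^ 3 * S ^ 8 := by ring
      _ ≤ 2 ^ 22 * #A ^ 3 * S ^ 8 := by gcongr
  calc Eₘ[A] ^ 4
    _ ≤ (4 * #(mulQuadruples A A A X) + Eₘ[A \ X]) ^ 4 := by
      gcongr
      exact mulEnergy_le_four_mul_card_mulQuadruples_add A X
    _ ≤ 2 ^ 3 * ((4 * #(mulQuadruples A A A X)) ^ 4 + Eₘ[A \ X] ^ 4) :=
      add_pow_le zero_le zero_le 4
    _ = 2 ^ 11 * #(mulQuadruples A A A X) ^ 4 + 2 ^ 3 * Eₘ[A \ X] ^ 4 := by ring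
    _ ≤ 2 ^ 11 * (2 ^ 16 * #A ^ 3 * S ^ 8) + 2 ^ 3 * (2 ^ 22 * #A ^ 3 * S ^ 8) := by gcongr
    _ ≤ 2 ^ 28 * #A ^ 3 * S ^ 8 := by linarith [Nat.zero_le (#A ^ 3 * S ^ 8)]

theorem mulEnergy_pow_four_le {ε : K} (hε : ε * ε = 1)
    (hcast : Set.InjOn (Nat.cast : ℕ → K) (Set.Iio (#A ^ 2))) :
    Eₘ[A] ^ 4 ≤ 2 ^ 32 * #A ^ 3 * #(A + ε • A) ^ 8 := by
  obtain rfl | hA := A.eq_empty_or_nonempty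
  · simp
  set S := #(A + ε • A) with hS
  have hAS : #A ≤ S := card_le_card_add_right (hA.smul_finset (a := ε))
  have hzero : (#A ^ 2) ^ 4 ≤ #A ^ 3 * S ^ 8 :=
    calc (#A ^ 2) ^ 4 = 1 * #A ^ 8 := by ring
      _ ≤ #A ^ 3 * S ^ 8 := by gcongr; exact Nat.one_le_pow _ _ hA.card_pos
  have hrest : Eₘ[A \ {0}] ^ 4 ≤ 2 ^ 28 * #A ^ 3 * S ^ 8 :=
    calc Eₘ[A \ {0}] ^ 4
      _ ≤ 2 ^ 28 * #(A \ {0}) ^ 3 * #(A \ {0} + ε • (A \ {0})) ^ 8 :=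
        mulEnergy_pow_four_le_of_zero_notMem hε (by simp)
          (hcast.mono (Set.Iio_subset_Iio (by gcongr; exact sdiff_subset)))
      _ ≤ 2 ^ 28 * #A ^ 3 * S ^ 8 := by rw [hS]; gcongr <;> exact sdiff_subset
  calc Eₘ[A] ^ 4
    _ ≤ (8 * #A ^ 2 + Eₘ[A \ {0}]) ^ 4 := by
      gcongr
      linarith [mulEnergy_le_four_mul_card_mulQuadruples_add A {0},
        card_mulQuadruples_zero_le A]
    _ ≤ 2 ^ 3 * ((8 * #A ^ 2) ^ 4 + Eₘ[A \ {0}] ^ 4) :=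
      add_pow_le zero_le zero_le 4
    _ = 2 ^ 15 * (#A ^ 2) ^ 4 + 2 ^ 3 * Eₘ[A \ {0}] ^ 4 := by ring
    _ ≤ 2 ^ 15 * (#A ^ 3 * S ^ 8) + 2 ^ 3 * (2 ^ 28 * #A ^ 3 * S ^ 8) := by gcongr
    _ ≤ 2 ^ 32 * #A ^ 3 * S ^ 8 := by linarith [Nat.zero_le (#A ^ 3 * S ^ 8)]

theorem paperMulEnergy_le_mulEnergy {p : ℕ} (Y Z : Finset (ZMod p)) :
    paperMulEnergy Y Z ≤ Eₘ[Y, Z] :=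
  sum_card_smul_inter_smul_le Y Y Z Z

end EnergyBound

end SumProduct

open scoped Combinatorics.Additive in
theorem energy_bound_eight_general {K : Type*} [Field K] [DecidableEq K] (A : Finset K)
    (hA : Set.InjOn (Nat.cast : ℕ → K) (Set.Iio (#A ^ 2))) :
    Eₘ[A] ^ 4 ≤ 2 ^ 32 * #A ^ 3 * #(A + A) ^ 8 ∧
      Eₘ[A] ^ 4 ≤ 2 ^ 32 * #A ^ 3 * #(A - A) ^ 8 := by
  have hadd := SumProduct.mulEnergy_pow_four_le (one_mul (1 : K)) hA
  have hsub := SumProduct.mulEnergy_pow_four_le (ε := (-1 : K)) (by simp) hA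
  rw [one_smul] at hadd
  rw [SumProduct.neg_one_smul_finset, ← sub_eq_add_neg] at hsub
  exact ⟨hadd, hsub⟩

theorem energy_bound_eight :
    ∃ C : ℝ, 0 < C ∧ ∀ (p : ℕ), p.Prime → ∀ A : Finset (ZMod p),
      2 ≤ A.card → (A.card : ℝ) ≤ Real.sqrt p →
      (paperMulEnergy A A : ℝ) ^ 4 ≤ C * (A.card : ℝ) ^ 3 * ((A + A).card : ℝ) ^ 8 ∧
      (paperMulEnergy A A : ℝ) ^ 4 ≤ C * (A.card : ℝ) ^ 3 * ((A - A).card : ℝ) ^ 8 := by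
  refine ⟨2 ^ 32, by positivity, fun p hp A _ hA ↦ ?_⟩
  have := Fact.mk hp
  have hA' : #A ^ 2 ≤ p := mod_cast (Real.le_sqrt (Nat.cast_nonneg _) (Nat.cast_nonneg _)).1 hA
  have hcast := (CharP.natCast_injOn_Iio (ZMod p) p).mono (Set.Iio_subset_Iio hA')
  obtain ⟨hadd, hsub⟩ := energy_bound_eight_general A hcast
  have hE := Nat.pow_le_pow_left (SumProduct.paperMulEnergy_le_mulEnergy A A) 4
  exact ⟨mod_cast hE.trans hadd, mod_cast hE.trans hsub⟩
end

section
/- There exist absolute constants c > 0 and α ≥ 0 such that for all finite nonempty A, B ⊆ F_p with |B| ≤ |A| ≤ p^{1/2}, one has max{|A+B|/|A|, |AB|/|A|} ≥ c(log|A|)^{−α}·(|B|⁶/|A|⁵)^{1/14}. -/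
open Finset Pointwise

/-!
Suppose `0 ∉ B`. The Cauchy–Schwarz lower bound `|A|² |B|² / |AB|` for the multiplicative energy of
`A` and `B`, together with a pigeonholing over levels that costs a logarithm, gives `e ∈ B`, `M` and
`B₁ ⊆ B` such that `|bA ∩ eA| ≥ M` for all `b ∈ B₁` and `M |B₁|` is large. Ruzsa's triangle
inequality through `bA ∩ eA` bounds `|eB ± bB|` by `|A + B|² / M`, so Plünnecke's inequality with
pivot `eB` bounds `|(a - b)B + (c - d)B|` from above for all `a, b, c, d ∈ B₁`.

For a lower bound let `Q = (B₁ - B₁) / (B₁ - B₁)`. If `r ∈ Q` but `r + 1 ∉ Q`, then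
`|X + (r + 1)B₁| = |X| |B₁|` for every `X ⊆ B₁`, and Plünnecke's inequality with pivot `B₁` yields
`|B₁|³ ≤ 4 |B₁ + B₁| |B₁ + rB₁|`. If there is no such `r`, then `Q = F_p`, and since `|B₁|² ≤ p`
some `r` makes `(x, y) ↦ x + ry` nearly injective on `B₁ × B₁`. Either way `r = (a - b) / (c - d)`
with `a, b, c, d ∈ B₁`, so the two bounds can be compared.
-/

section Pluennecke
variable {G ι : Type*} [AddCommGroup G] [DecidableEq G] {s : Finset ι} {Y : ι → Finset G}
  {A X : Finset G}

-- Petridis' inequality in `G × (ι →₀ ℤ)` for `X × {0}` and the disjoint union of the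
-- `Y i × {single i 1}`.
lemma sum_card_add_add_mul_card_le (s : Finset ι) (Y : ι → Finset G)
    (hX : ∀ X' ⊆ X, (∑ i ∈ s, #(X + Y i)) * #X' ≤ (∑ i ∈ s, #(X' + Y i)) * #X) (C : Finset G) :
    (∑ i ∈ s, #(C + X + Y i)) * #X ≤ (∑ i ∈ s, #(X + Y i)) * #(C + X) := by
  classical
  let U : Finset (G × (ι →₀ ℤ)) := s.biUnion fun i ↦ Y i ×ˢ {Finsupp.single i 1}
  have card_add_U (Z : Finset G) : #(Z ×ˢ {0} + U) = ∑ i ∈ s, #(Z + Y i) := by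
    have : Z ×ˢ {0} + U = s.biUnion fun i ↦ (Z + Y i) ×ˢ {Finsupp.single i 1} := by
      ext ⟨g, h⟩
      simp only [U, mem_add, mem_biUnion, mem_product, mem_singleton, Prod.exists, Prod.mk_add_mk,
        Prod.mk.injEq]
      grind
    rw [this, card_biUnion]
    · simp
    · intro i _ j _ hij
      rw [Function.onFun, disjoint_product]
      exact .inr (by simpa [Finsupp.single_left_inj] using hij)
  have lift_min : ∀ X' ⊆ X ×ˢ {(0 : ι →₀ ℤ)},
      #(X ×ˢ {0} + U) * #X' ≤ #(X' + U) * #(X ×ˢ {(0 : ι →₀ ℤ)}) := by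
    intro X' hX'
    obtain ⟨Z, hZ, rfl⟩ : ∃ Z ⊆ X, X' = Z ×ˢ {0} := by
      refine ⟨X'.image Prod.fst, ?_, ?_⟩
      · grind
      · ext ⟨g, h⟩
        grind
    simpa [-product_singleton, card_add_U] using hX Z hZ
  simpa [-product_singleton, product_add_product_comm, card_add_U] using
    pluennecke_petridis_inequality_add (C ×ˢ {0}) lift_min

lemma exists_nonempty_subset_mul_card_le {α : Type*} {A : Finset α} (hA : A.Nonempty)
    (f : Finset α → ℕ) :
    ∃ X ⊆ A, X.Nonempty ∧ ∀ X' ⊆ A, f X * #X' ≤ f X' * #X := by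
  classical
  obtain ⟨X, hX, hmin⟩ := exists_min_image (A.powerset.erase ∅) (fun X ↦ (f X / #X : ℚ))
    ⟨A, by simp [hA.ne_empty]⟩
  rw [mem_erase, mem_powerset, ← nonempty_iff_ne_empty] at hX
  refine ⟨X, hX.2, hX.1, fun X' hX' ↦ ?_⟩
  obtain rfl | hne := X'.eq_empty_or_nonempty
  · simp
  have h := hmin X' (by simp [hne.ne_empty, hX'])
  rw [div_le_div_iff₀ (mod_cast hX.1.card_pos) (mod_cast hne.card_pos)] at h
  exact_mod_cast h

-- Weighting the growth `#(X + Y i)` by the product of the other `#(A + Y j)` balances the summands.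
lemma exists_subset_card_add_add_mul_card_le (hA : A.Nonempty) (hY : ∀ i ∈ s, (Y i).Nonempty) :
    ∃ X ⊆ A, X.Nonempty ∧ ∀ C : Finset G, ∀ i ∈ s,
      #(C + X + Y i) * #A ≤ #s * #(A + Y i) * #(C + X) := by
  classical
  let w (i : ι) : ℕ := ∏ j ∈ s.erase i, #(A + Y j)
  have w_mul (i : ι) (hi : i ∈ s) : w i * #(A + Y i) = ∏ j ∈ s, #(A + Y j) :=
    prod_erase_mul s _ hi
  have sum_w_mul : ∑ i ∈ s, w i * #(A + Y i) = #s * ∏ j ∈ s, #(A + Y j) := by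
    rw [sum_congr rfl w_mul, sum_const, smul_eq_mul]
  have w_pos (i : ι) : 0 < w i :=
    prod_pos fun j hj ↦ (hA.add (hY j (mem_of_mem_erase hj))).card_pos
  obtain ⟨X, hXA, hX, hmin⟩ := exists_nonempty_subset_mul_card_le hA
    fun X ↦ ∑ i ∈ s, w i * #(X + Y i)
  refine ⟨X, hXA, hX, fun C i hi ↦ ?_⟩
  have petridis : (∑ i ∈ s, w i * #(C + X + Y i)) * #X ≤
      (∑ i ∈ s, w i * #(X + Y i)) * #(C + X) := by
    simpa [sum_sigma] using sum_card_add_add_mul_card_le (s.sigma fun i ↦ range (w i))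
      (fun j ↦ Y j.1) (fun X' hX' ↦ by simpa [sum_sigma] using hmin X' (hX'.trans hXA)) C
  refine le_of_mul_le_mul_left ?_ (Nat.mul_pos (w_pos i) hX.card_pos)
  calc w i * #X * (#(C + X + Y i) * #A) = w i * #(C + X + Y i) * #X * #A := by ring
    _ ≤ (∑ i ∈ s, w i * #(C + X + Y i)) * #X * #A := by
      gcongr
      exact single_le_sum (f := fun i ↦ w i * #(C + X + Y i)) (fun _ _ ↦ Nat.zero_le _) hi
    _ ≤ (∑ i ∈ s, w i * #(X + Y i)) * #(C + X) * #A := by gcongr ?_ * _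
    _ = (∑ i ∈ s, w i * #(X + Y i)) * #A * #(C + X) := by ring
    _ ≤ (∑ i ∈ s, w i * #(A + Y i)) * #X * #(C + X) := by gcongr ?_ * _; exact hmin A subset_rfl
    _ = w i * #X * (#s * #(A + Y i) * #(C + X)) := by rw [sum_w_mul, ← w_mul i hi]; ring

lemma exists_subset_card_add_sum_mul_pow_le (hA : A.Nonempty) (hY : ∀ i ∈ s, (Y i).Nonempty) :
    ∃ X ⊆ A, X.Nonempty ∧
      #(X + ∑ i ∈ s, Y i) * #A ^ #s ≤ #s ^ #s * (∏ i ∈ s, #(A + Y i)) * #X := by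
  classical
  obtain ⟨X, hXA, hX, hgrowth⟩ := exists_subset_card_add_add_mul_card_le hA hY
  refine ⟨X, hXA, hX, ?_⟩
  suffices ∀ t ⊆ s, #(X + ∑ i ∈ t, Y i) * #A ^ #t ≤ #s ^ #t * (∏ i ∈ t, #(A + Y i)) * #X from
    this s subset_rfl
  intro t
  induction t using Finset.induction_on with
  | empty => simp
  | insert i t hit ih =>
    intro ht
    obtain ⟨hi, hts⟩ := insert_subset_iff.1 ht
    rw [sum_insert hit, prod_insert hit, card_insert_of_notMem hit]
    set Z := ∑ i ∈ t, Y i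
    calc #(X + (Y i + Z)) * #A ^ (#t + 1) = #(Z + X + Y i) * #A * #A ^ #t := by
          rw [add_left_comm, add_comm (Y i), add_comm X]; ring
      _ ≤ #s * #(A + Y i) * #(X + Z) * #A ^ #t := by
          rw [add_comm X]; gcongr ?_ * _; exact hgrowth Z i hi
      _ = #s * #(A + Y i) * (#(X + Z) * #A ^ #t) := by ring
      _ ≤ #s * #(A + Y i) * (#s ^ #t * (∏ i ∈ t, #(A + Y i)) * #X) := by
          gcongr _ * ?_; exact ih hts
      _ = _ := by ring

lemma card_sum_mul_pow_le (hA : A.Nonempty) (hY : ∀ i ∈ s, (Y i).Nonempty) :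
    #(∑ i ∈ s, Y i) * #A ^ #s ≤ #s ^ #s * (∏ i ∈ s, #(A + Y i)) * #A := by
  obtain ⟨X, hXA, hX, h⟩ := exists_subset_card_add_sum_mul_pow_le hA hY
  calc #(∑ i ∈ s, Y i) * #A ^ #s ≤ #(X + ∑ i ∈ s, Y i) * #A ^ #s := by
        gcongr ?_ * _; exact card_le_card_add_left hX
    _ ≤ #s ^ #s * (∏ i ∈ s, #(A + Y i)) * #X := h
    _ ≤ #s ^ #s * (∏ i ∈ s, #(A + Y i)) * #A := by gcongr

end Pluennecke

section Counting
variable {α : Type*}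

lemma card_sq_le_card_image_mul {β : Type*} [DecidableEq β] (S : Finset α) (f : α → β) :
    #S ^ 2 ≤ #(S.image f) * #{x ∈ S ×ˢ S | f x.1 = f x.2} := by
  have sum_sq_fibers : #{x ∈ S ×ˢ S | f x.1 = f x.2} = ∑ y ∈ S.image f, #{a ∈ S | f a = y} ^ 2 := by
    rw [card_eq_sum_card_fiberwise (f := fun x ↦ f x.1) (t := S.image f)
      (fun x hx ↦ mem_image_of_mem f (mem_product.1 (mem_filter.1 hx).1).1)]
    refine sum_congr rfl fun y _ ↦ ?_
    rw [sq, ← card_product]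
    congr 1
    grind
  rw [sum_sq_fibers, card_eq_sum_card_image f S]
  exact sq_sum_le_card_mul_sum_sq

lemma sum_eq_sum_Icc_card_filter_le {S : Finset α} {f : α → ℕ} {N : ℕ} (hf : ∀ a ∈ S, f a ≤ N) :
    ∑ a ∈ S, f a = ∑ t ∈ Icc 1 N, #{a ∈ S | t ≤ f a} := by
  simp only [card_filter]
  rw [sum_comm]
  refine sum_congr rfl fun a ha ↦ ?_
  have : {t ∈ Icc 1 N | t ≤ f a} = Icc 1 (f a) := by
    have := hf a ha
    grind
  rw [← card_filter, this, Nat.card_Icc, Nat.add_sub_cancel]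

lemma sum_Icc_inv_le_one_add_log (N : ℕ) : ∑ t ∈ Icc 1 N, (t : ℝ)⁻¹ ≤ 1 + Real.log N := by
  simpa [harmonic_eq_sum_Icc] using harmonic_le_one_add_log N

lemma exists_sum_le_mul_card_filter_le_mul_log {S : Finset α} {f : α → ℕ} {N : ℕ} (hN : 0 < N)
    (hf : ∀ a ∈ S, f a ≤ N) :
    ∃ t, 0 < t ∧ (∑ a ∈ S, f a : ℝ) ≤ t * #{a ∈ S | t ≤ f a} * (1 + Real.log N) := by
  obtain ⟨t, ht, hmax⟩ := exists_max_image (Icc 1 N) (fun t ↦ t * #{a ∈ S | t ≤ f a})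
    (nonempty_Icc.2 hN)
  refine ⟨t, (mem_Icc.1 ht).1, ?_⟩
  calc (∑ a ∈ S, f a : ℝ) = ∑ u ∈ Icc 1 N, (#{a ∈ S | u ≤ f a} : ℝ) :=
        mod_cast sum_eq_sum_Icc_card_filter_le hf
    _ ≤ ∑ u ∈ Icc 1 N, (t * #{a ∈ S | t ≤ f a} : ℝ) * (u : ℝ)⁻¹ := by
        refine sum_le_sum fun u hu ↦ ?_
        have u_pos : (0 : ℝ) < u := mod_cast (mem_Icc.1 hu).1
        rw [← div_eq_mul_inv, le_div_iff₀' u_pos]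
        exact mod_cast hmax u hu
    _ ≤ t * #{a ∈ S | t ≤ f a} * (1 + Real.log N) := by
        rw [← mul_sum]
        gcongr
        exact sum_Icc_inv_le_one_add_log N

end Counting

section PopularDilates
variable {K : Type*} [CommGroupWithZero K] [DecidableEq K] {A B : Finset K}

lemma card_filter_mul_eq_mul (A : Finset K) {b c : K} (hb : b ≠ 0) (hc : c ≠ 0) :
    #{x ∈ A ×ˢ A | x.1 * b = x.2 * c} = #(b • A ∩ c • A) := by
  refine card_nbij' (fun x ↦ b * x.1) (fun y ↦ (b⁻¹ * y, c⁻¹ * y)) ?_ ?_ ?_ ?_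
  · rintro ⟨x, y⟩ h
    simp only [coe_filter, mem_product, Set.mem_ofPred_eq] at h
    simp only [coe_inter, Set.mem_inter_iff, mem_coe, mem_smul_finset, smul_eq_mul]
    exact ⟨⟨x, h.1.1, rfl⟩, y, h.1.2, by rw [mul_comm, ← h.2, mul_comm]⟩
  · intro y h
    simp only [coe_inter, Set.mem_inter_iff, mem_coe, mem_smul_finset, smul_eq_mul] at h
    obtain ⟨⟨x, hx, rfl⟩, z, hz, hzx⟩ := h
    have hz' : c⁻¹ * (b * x) = z := by rw [← hzx, inv_mul_cancel_left₀ hc]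
    simp only [coe_filter, mem_product, Set.mem_ofPred_eq, inv_mul_cancel_left₀ hb, hz']
    exact ⟨⟨hx, hz⟩, by rw [mul_comm x, mul_comm z, hzx]⟩
  · rintro ⟨x, y⟩ h
    simp only [coe_filter, mem_product, Set.mem_ofPred_eq] at h
    have hxy : b * x = c * y := by rw [mul_comm, h.2, mul_comm]
    exact Prod.ext (inv_mul_cancel_left₀ hb x) (by simp only [hxy, inv_mul_cancel_left₀ hc])
  · intro y _
    exact mul_inv_cancel_left₀ hb y

lemma mulEnergy_eq_sum_card_smul_inter_smul (A : Finset K) (hB : 0 ∉ B) :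
    mulEnergy A B = ∑ c ∈ B, ∑ b ∈ B, #(b • A ∩ c • A) := by
  rw [mulEnergy, card_filter, sum_product_right, sum_product_right]
  refine sum_congr rfl fun c hc ↦ sum_congr rfl fun b hb ↦ ?_
  rw [← card_filter, card_filter_mul_eq_mul A (ne_of_mem_of_not_mem hb hB)
    (ne_of_mem_of_not_mem hc hB)]

lemma exists_card_sq_mul_card_le_mul_sum_card_smul_inter_smul (A : Finset K) (hB : B.Nonempty)
    (h0 : 0 ∉ B) :
    ∃ c ∈ B, #A ^ 2 * #B ≤ #(A * B) * ∑ b ∈ B, #(b • A ∩ c • A) := by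
  refine exists_le_of_sum_le hB ?_
  calc ∑ _ ∈ B, #A ^ 2 * #B = #A ^ 2 * #B ^ 2 := by rw [sum_const, smul_eq_mul]; ring
    _ ≤ #(A * B) * mulEnergy A B := le_card_mul_mul_mulEnergy A B
    _ = ∑ c ∈ B, #(A * B) * ∑ b ∈ B, #(b • A ∩ c • A) := by
      rw [mulEnergy_eq_sum_card_smul_inter_smul A h0, mul_sum]

lemma exists_popular_dilates (hA : A.Nonempty) (hB : B.Nonempty) (h0 : 0 ∉ B) :
    ∃ c ∈ B, ∃ B₁ ⊆ B, ∃ M, 0 < M ∧ B₁.Nonempty ∧ (∀ b ∈ B₁, M ≤ #(b • A ∩ c • A)) ∧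
      (#A ^ 2 * #B : ℝ) ≤ #(A * B) * (M * #B₁ * (1 + Real.log #A)) := by
  obtain ⟨c, hc, energy⟩ := exists_card_sq_mul_card_le_mul_sum_card_smul_inter_smul A hB h0
  obtain ⟨M, hM, level⟩ := exists_sum_le_mul_card_filter_le_mul_log (S := B)
    (f := fun b ↦ #(b • A ∩ c • A)) hA.card_pos
    fun b _ ↦ (card_le_card inter_subset_left).trans card_smul_finset_le
  set B₁ := {b ∈ B | M ≤ #(b • A ∩ c • A)}
  have large : (#A ^ 2 * #B : ℝ) ≤ #(A * B) * (M * #B₁ * (1 + Real.log #A)) := by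
    have : (#A ^ 2 * #B : ℝ) ≤ #(A * B) * ∑ b ∈ B, (#(b • A ∩ c • A) : ℝ) := mod_cast energy
    exact this.trans (by gcongr)
  have B₁_nonempty : B₁.Nonempty := by
    have pos : (0 : ℝ) < #A ^ 2 * #B := mod_cast Nat.mul_pos (pow_pos hA.card_pos 2) hB.card_pos
    refine nonempty_iff_ne_empty.2 fun h ↦ (pos.trans_le large).ne' ?_
    rw [h, card_empty, Nat.cast_zero, mul_zero, zero_mul, mul_zero]
  exact ⟨c, hc, B₁, filter_subset _ _, M, hM, B₁_nonempty, fun b hb ↦ (mem_filter.1 hb).2, large⟩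

end PopularDilates

section CommonDilates
variable {R V : Type*} [AddCommGroup V] [DecidableEq V]

lemma card_smul_add_le_card_add [DistribSMul R V] {A P : Finset V} {b : R} (hP : P ⊆ b • A)
    (B : Finset V) : #(b • B + P) ≤ #(A + B) := by
  calc #(b • B + P) ≤ #(b • (A + B)) := by rw [smul_add, add_comm]; gcongr
    _ ≤ #(A + B) := card_smul_finset_le

lemma card_smul_inter_smul_mul_card_smul_add_smul_le [DistribSMul R V] (A B : Finset V) (b c : R) :
    #(b • A ∩ c • A) * #(c • B + b • B) ≤ #(A + B) ^ 2 := by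
  set P := b • A ∩ c • A
  have hb : #(b • B + P) ≤ #(A + B) := card_smul_add_le_card_add inter_subset_left B
  have hc : #(c • B + P) ≤ #(A + B) := card_smul_add_le_card_add inter_subset_right B
  calc #P * #(c • B + b • B) = #(c • B + b • B) * #P := mul_comm _ _
    _ ≤ #(c • B + P) * #(P + b • B) := ruzsa_triangle_inequality_add_add_add _ _ _
    _ ≤ #(A + B) * #(A + B) := by rw [add_comm P]; gcongr
    _ = #(A + B) ^ 2 := (sq _).symm

lemma card_smul_inter_smul_mul_card_smul_sub_smul_le [DistribSMul R V] (A B : Finset V) (b c : R) :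
    #(b • A ∩ c • A) * #(c • B - b • B) ≤ #(A + B) ^ 2 := by
  set P := b • A ∩ c • A
  have hb : #(b • B + P) ≤ #(A + B) := card_smul_add_le_card_add inter_subset_left B
  have hc : #(c • B + P) ≤ #(A + B) := card_smul_add_le_card_add inter_subset_right B
  calc #P * #(c • B - b • B) = #(c • B - b • B) * #P := mul_comm _ _
    _ ≤ #(c • B + P) * #(b • B + P) := ruzsa_triangle_inequality_sub_add_add _ _ _
    _ ≤ #(A + B) * #(A + B) := by gcongr
    _ = #(A + B) ^ 2 := (sq _).symm

lemma sub_smul_finset_subset [Ring R] [Module R V] (a b : R) (B : Finset V) :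
    (a - b) • B ⊆ a • B - b • B := by
  intro x hx
  obtain ⟨y, hy, rfl⟩ := mem_smul_finset.1 hx
  rw [sub_smul]
  exact sub_mem_sub (smul_mem_smul_finset hy) (smul_mem_smul_finset hy)

lemma card_sub_smul_add_sub_smul_mul_le {K : Type*} [DivisionRing K] [Module K V] {A B : Finset V}
    {S : Finset K} {e : K} {M : ℕ} (hB : B.Nonempty) (he : e ≠ 0)
    (hS : ∀ b ∈ S, M ≤ #(b • A ∩ e • A)) {a b c d : K} (ha : a ∈ S) (hb : b ∈ S) (hc : c ∈ S)
    (hd : d ∈ S) :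
    #((a - b) • B + (c - d) • B) * #B ^ 3 * M ^ 4 ≤ 256 * #(A + B) ^ 8 := by
  let Y : Fin 4 → Finset V := ![a • B, -(b • B), c • B, -(d • B)]
  have add_le {x : K} (hx : x ∈ S) : M * #(e • B + x • B) ≤ #(A + B) ^ 2 :=
    (Nat.mul_le_mul_right _ (hS x hx)).trans
      (card_smul_inter_smul_mul_card_smul_add_smul_le A B x e)
  have sub_le {x : K} (hx : x ∈ S) : M * #(e • B + -(x • B)) ≤ #(A + B) ^ 2 := by
    rw [← sub_eq_add_neg]
    exact (Nat.mul_le_mul_right _ (hS x hx)).trans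
      (card_smul_inter_smul_mul_card_smul_sub_smul_le A B x e)
  have growth : ∀ i, M * #(e • B + Y i) ≤ #(A + B) ^ 2 := by
    simp [Y, Fin.forall_fin_succ, add_le ha, sub_le hb, add_le hc, sub_le hd]
  have subset_sum : (a - b) • B + (c - d) • B ⊆ ∑ i, Y i := by
    simp only [Y, Fin.sum_univ_four, Matrix.cons_val]
    rw [add_assoc (a • B + -(b • B)), ← sub_eq_add_neg, ← sub_eq_add_neg]
    exact add_subset_add (sub_smul_finset_subset a b B) (sub_smul_finset_subset c d B)
  have pluennecke : #(∑ i, Y i) * #B ^ 4 ≤ 4 ^ 4 * (∏ i, #(e • B + Y i)) * #B := by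
    simpa [card_smul_finset₀ he] using card_sum_mul_pow_le (hB.smul_finset (a := e)) (s := univ)
      (Y := Y) (by simp [Y, Fin.forall_fin_succ, hB])
  refine le_of_mul_le_mul_right ?_ hB.card_pos
  calc #((a - b) • B + (c - d) • B) * #B ^ 3 * M ^ 4 * #B
      ≤ #(∑ i, Y i) * #B ^ 3 * M ^ 4 * #B := by gcongr
    _ = #(∑ i, Y i) * #B ^ 4 * M ^ 4 := by ring
    _ ≤ 4 ^ 4 * (∏ i, #(e • B + Y i)) * #B * M ^ 4 := by gcongr ?_ * _
    _ = 256 * (∏ i, M * #(e • B + Y i)) * #B := by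
      rw [prod_mul_distrib, prod_const, card_univ, Fintype.card_fin]; ring
    _ ≤ 256 * (∏ _ : Fin 4, #(A + B) ^ 2) * #B := by gcongr with i; exact growth i
    _ = 256 * #(A + B) ^ 8 * #B := by rw [Fin.prod_const]; ring

end CommonDilates

section QuotientSet
variable {F : Type*} [Field F] [DecidableEq F] {B X Y : Finset F} {r : F}

/-- The set `(B - B) / (B - B)` of slopes of lines through two points of `B × B`, where only
nonzero denominators are allowed. -/
def quotientSet (B : Finset F) : Finset F := (B - B) / (B - B).erase 0

lemma mem_quotientSet :
    r ∈ quotientSet B ↔ ∃ a ∈ B, ∃ b ∈ B, ∃ c ∈ B, ∃ d ∈ B, c ≠ d ∧ (a - b) / (c - d) = r := by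
  simp only [quotientSet, mem_div, mem_erase, mem_sub]
  constructor
  · rintro ⟨_, ⟨a, ha, b, hb, rfl⟩, _, ⟨hne, c, hc, d, hd, rfl⟩, rfl⟩
    exact ⟨a, ha, b, hb, c, hc, d, hd, sub_ne_zero.1 hne, rfl⟩
  · rintro ⟨a, ha, b, hb, c, hc, d, hd, hne, rfl⟩
    exact ⟨_, ⟨a, ha, b, hb, rfl⟩, _, ⟨sub_ne_zero.2 hne, c, hc, d, hd, rfl⟩, rfl⟩

lemma zero_mem_quotientSet (hB : B.Nontrivial) : 0 ∈ quotientSet B := by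
  obtain ⟨c, hc, d, hd, hcd⟩ := hB
  exact mem_quotientSet.2 ⟨c, hc, c, hc, c, hc, d, hd, hcd, by simp⟩

lemma card_mul_card_le_card_add_smul (hr : r ∉ quotientSet B) (hX : X ⊆ B) (hY : Y ⊆ B) :
    #X * #Y ≤ #(X + r • Y) := by
  rw [← card_product]
  refine card_le_card_of_injOn (fun z ↦ z.1 + r • z.2) ?_ ?_
  · rintro ⟨x, y⟩ hz
    obtain ⟨hx, hy⟩ := mem_product.1 hz
    exact add_mem_add hx (smul_mem_smul_finset hy)
  · rintro ⟨x, y⟩ hz ⟨x', y'⟩ hz' heq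
    obtain ⟨hx, hy⟩ := mem_product.1 hz
    obtain ⟨hx', hy'⟩ := mem_product.1 hz'
    simp only [smul_eq_mul] at hx hy hx' hy' heq
    obtain rfl : y = y' := by
      by_contra hne
      refine hr (mem_quotientSet.2 ⟨x, hX hx, x', hX hx', y', hY hy', y, hY hy, Ne.symm hne, ?_⟩)
      rw [div_eq_iff (sub_ne_zero.2 (Ne.symm hne))]
      linear_combination heq
    simpa using heq

lemma card_pow_three_le_of_add_one_notMem_quotientSet (hB : B.Nonempty)
    (hr : r + 1 ∉ quotientSet B) : #B ^ 3 ≤ 4 * #(B + B) * #(B + r • B) := by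
  obtain ⟨X, hXB, hX, pluennecke⟩ := exists_subset_card_add_sum_mul_pow_le hB
    (s := univ) (Y := ![B, r • B]) (by simp [Fin.forall_fin_succ, hB])
  simp only [Fin.sum_univ_two, Fin.prod_univ_two, card_univ, Fintype.card_fin,
    Matrix.cons_val] at pluennecke
  have add_one_smul_subset : X + (r + 1) • B ⊆ X + (B + r • B) := by
    gcongr
    intro x hx
    obtain ⟨b, hb, rfl⟩ := mem_smul_finset.1 hx
    rw [add_smul, one_smul, add_comm (r • b)]
    exact add_mem_add hb (smul_mem_smul_finset hb)
  refine le_of_mul_le_mul_right ?_ hX.card_pos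
  calc #B ^ 3 * #X = #X * #B * #B ^ 2 := by ring
    _ ≤ #(X + (r + 1) • B) * #B ^ 2 := by
      gcongr ?_ * _
      exact card_mul_card_le_card_add_smul hr hXB subset_rfl
    _ ≤ #(X + (B + r • B)) * #B ^ 2 := by gcongr
    _ ≤ 2 ^ 2 * (#(B + B) * #(B + r • B)) * #X := pluennecke
    _ = 4 * #(B + B) * #(B + r • B) * #X := by ring

lemma sum_card_filter_add_mul_eq_le [Fintype F] (S : Finset (F × F)) :
    ∑ r : F, #{z ∈ S ×ˢ S | z.1.1 + r * z.1.2 = z.2.1 + r * z.2.2} ≤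
      #S * Fintype.card F + #S ^ 2 := by
  have card_slopes_le (x y : F × F) : #{r : F | x.1 + r * x.2 = y.1 + r * y.2} ≤
      (if x = y then Fintype.card F else 0) + 1 := by
    split_ifs with hxy
    · exact (card_filter_le _ _).trans (Nat.le_succ _)
    rw [zero_add, card_le_one]
    intro r hr t ht
    simp only [mem_filter_univ] at hr ht
    have hne : x.2 - y.2 ≠ 0 := fun h ↦ hxy <| by
      have := sub_eq_zero.1 h
      exact Prod.ext (by simpa [this] using hr) this
    refine mul_right_cancel₀ hne ?_
    linear_combination hr - ht
  calc ∑ r : F, #{z ∈ S ×ˢ S | z.1.1 + r * z.1.2 = z.2.1 + r * z.2.2}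
      = ∑ x ∈ S, ∑ y ∈ S, #{r : F | x.1 + r * x.2 = y.1 + r * y.2} := by
        simp only [card_filter]
        rw [sum_comm, sum_product]
    _ ≤ ∑ x ∈ S, ∑ y ∈ S, ((if x = y then Fintype.card F else 0) + 1) := by
        gcongr; exact card_slopes_le _ _
    _ = #S * Fintype.card F + #S ^ 2 := by
        simp [sum_add_distrib, sq]

lemma exists_card_le_two_mul_card_image_add_mul [Fintype F] {S : Finset (F × F)}
    (hS : #S ≤ Fintype.card F) : ∃ r : F, #S ≤ 2 * #(S.image fun x ↦ x.1 + r * x.2) := by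
  obtain rfl | hne := S.eq_empty_or_nonempty
  · simp
  obtain ⟨r, -, few_collisions⟩ : ∃ r ∈ (univ : Finset F),
      #{z ∈ S ×ˢ S | z.1.1 + r * z.1.2 = z.2.1 + r * z.2.2} ≤ 2 * #S := by
    refine exists_le_of_sum_le univ_nonempty ((sum_card_filter_add_mul_eq_le S).trans ?_)
    rw [sum_const, card_univ, smul_eq_mul]
    nlinarith
  refine ⟨r, le_of_mul_le_mul_right ?_ hne.card_pos⟩
  calc #S * #S = #S ^ 2 := (sq _).symm
    _ ≤ #(S.image fun x ↦ x.1 + r * x.2) * (2 * #S) :=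
      (card_sq_le_card_image_mul S _).trans (Nat.mul_le_mul_left _ few_collisions)
    _ = 2 * #(S.image fun x ↦ x.1 + r * x.2) * #S := by ring

lemma exists_card_sq_le_two_mul_card_add_smul [Fintype F] (hB : #B ^ 2 ≤ Fintype.card F) :
    ∃ r : F, #B ^ 2 ≤ 2 * #(B + r • B) := by
  obtain ⟨r, hr⟩ := exists_card_le_two_mul_card_image_add_mul (S := B ×ˢ B)
    (by rwa [card_product, ← sq])
  refine ⟨r, ?_⟩
  rw [card_product, ← sq] at hr
  refine hr.trans (Nat.mul_le_mul_left _ (card_le_card ?_))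
  rw [image_subset_iff]
  intro x hx
  obtain ⟨h₁, h₂⟩ := mem_product.1 hx
  exact add_mem_add h₁ (smul_mem_smul_finset h₂)

lemma card_smul_add_smul_eq_card_add_div_smul (A B : Finset F) {a b : F} (hb : b ≠ 0) :
    #(a • A + b • B) = #(B + (a / b) • A) := by
  rw [← card_smul_finset₀ hb (B + (a / b) • A), smul_add, smul_smul, mul_div_cancel₀ _ hb, add_comm]

end QuotientSet

section Logarithms

lemma rpow_neg_mul_rpow_neg_mul_rpow_le {x y K l : ℝ} {m n : ℕ} (hx : 0 ≤ x) (hy : 0 ≤ y)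
    (hK : 0 < K) (hl : 0 < l) (hn : n ≠ 0) (h : x ≤ K * l ^ m * y ^ n) :
    K ^ (-(1 / n) : ℝ) * l ^ (-(m / n) : ℝ) * x ^ (1 / n : ℝ) ≤ y := by
  have root_le : x ^ (1 / n : ℝ) ≤ K ^ (1 / n : ℝ) * l ^ (m / n : ℝ) * y := by
    refine (Real.rpow_le_rpow hx h (by positivity)).trans_eq ?_
    rw [Real.mul_rpow (by positivity) (by positivity), Real.mul_rpow hK.le (by positivity),
      ← Real.rpow_natCast_mul hl.le, mul_one_div, one_div, Real.pow_rpow_inv_natCast hy hn]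
  rwa [Real.rpow_neg hK.le, Real.rpow_neg hl.le, ← mul_inv, inv_mul_le_iff₀ (by positivity)]

lemma one_add_log_le_three_mul_log {x : ℝ} (hx : 2 ≤ x) : 1 + Real.log x ≤ 3 * Real.log x := by
  have : Real.log 2 ≤ Real.log x := Real.log_le_log two_pos hx
  linarith [Real.log_two_gt_d9]

end Logarithms

section PrimeField
variable {p : ℕ}

lemma eq_univ_of_zero_mem_of_add_one_mem [NeZero p] {S : Finset (ZMod p)} (h0 : 0 ∈ S)
    (hadd : ∀ r ∈ S, r + 1 ∈ S) : S = univ := by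
  refine eq_univ_of_forall fun r ↦ ?_
  rw [← ZMod.natCast_zmod_val r]
  induction r.val with
  | zero => simpa using h0
  | succ n ih => simpa using hadd _ ih

variable [Fact p.Prime] {A B : Finset (ZMod p)}

lemma exists_mem_quotientSet_card_pow_three_le (hB : B.Nontrivial) (hp : #B ^ 2 ≤ p) :
    ∃ r ∈ quotientSet B, #B ^ 3 ≤ 4 * #(B + B) * #(B + r • B) := by
  by_cases hclosed : ∀ r ∈ quotientSet B, r + 1 ∈ quotientSet B
  · obtain ⟨r, hr⟩ := exists_card_sq_le_two_mul_card_add_smul (B := B) (by rwa [ZMod.card])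
    have hQ : quotientSet B = univ :=
      eq_univ_of_zero_mem_of_add_one_mem (zero_mem_quotientSet hB) hclosed
    refine ⟨r, hQ ▸ mem_univ r, ?_⟩
    calc #B ^ 3 = #B * #B ^ 2 := by ring
      _ ≤ #(B + B) * (2 * #(B + r • B)) := Nat.mul_le_mul (card_le_card_add_left hB.nonempty) hr
      _ = 2 * #(B + B) * #(B + r • B) := by ring
      _ ≤ 4 * #(B + B) * #(B + r • B) := by gcongr; norm_num
  · push Not at hclosed
    obtain ⟨r, hr, hr'⟩ := hclosed
    exact ⟨r, hr, card_pow_three_le_of_add_one_notMem_quotientSet hB.nonempty hr'⟩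

lemma exists_card_pow_three_le_mul_card_sub_smul_add (hB : B.Nonempty) (hp : #B ^ 2 ≤ p) :
    ∃ a ∈ B, ∃ b ∈ B, ∃ c ∈ B, ∃ d ∈ B,
      #B ^ 3 ≤ 4 * #(B + B) * #((a - b) • B + (c - d) • B) := by
  obtain ⟨b, rfl⟩ | hnt := hB.exists_eq_singleton_or_nontrivial
  · simp
  obtain ⟨r, hr, hle⟩ := exists_mem_quotientSet_card_pow_three_le hnt hp
  obtain ⟨a, ha, b, hb, c, hc, d, hd, hcd, rfl⟩ := mem_quotientSet.1 hr
  refine ⟨a, ha, b, hb, c, hc, d, hd, ?_⟩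
  rwa [card_smul_add_smul_eq_card_add_div_smul B B (sub_ne_zero.2 hcd)]

lemma card_pow_six_mul_card_pow_nine_le_of_zero_notMem (hA : A.Nonempty) (hB : B.Nonempty)
    (h0 : 0 ∉ B) (hp : #B ^ 2 ≤ p) :
    (#B ^ 6 * #A ^ 9 : ℝ) ≤ 1024 * #(A + B) ^ 10 * #(A * B) ^ 4 * (1 + Real.log #A) ^ 4 := by
  obtain ⟨e, he, B₁, hB₁, M, hM, hB₁ne, popular, energy⟩ := exists_popular_dilates hA hB h0
  obtain ⟨a, ha, b, hb, c, hc, d, hd, cube_le⟩ :=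
    exists_card_pow_three_le_mul_card_sub_smul_add hB₁ne
      ((Nat.pow_le_pow_left (card_le_card hB₁) 2).trans hp)
  have dilates_le : #((a - b) • B + (c - d) • B) * #B ^ 3 * M ^ 4 ≤ 256 * #(A + B) ^ 8 :=
    card_sub_smul_add_sub_smul_mul_le hB (ne_of_mem_of_not_mem he h0) popular ha hb hc hd
  have doubling_le : #(B + B) * #A ≤ #(A + B) ^ 2 := by
    simpa [add_comm B A, sq] using ruzsa_triangle_inequality_add_add_add B A B
  have growth_le : #B₁ ^ 3 * (#B ^ 3 * M ^ 4 * #A) ≤ 1024 * #(A + B) ^ 10 := by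
    calc #B₁ ^ 3 * (#B ^ 3 * M ^ 4 * #A)
        ≤ 4 * #(B₁ + B₁) * #((a - b) • B₁ + (c - d) • B₁) * (#B ^ 3 * M ^ 4 * #A) := by
          gcongr ?_ * _
      _ ≤ 4 * #(B + B) * #((a - b) • B + (c - d) • B) * (#B ^ 3 * M ^ 4 * #A) := by gcongr
      _ = 4 * (#(B + B) * #A) * (#((a - b) • B + (c - d) • B) * #B ^ 3 * M ^ 4) := by ring
      _ ≤ 4 * #(A + B) ^ 2 * (256 * #(A + B) ^ 8) := by gcongr
      _ = 1024 * #(A + B) ^ 10 := by ring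
  have := Real.log_natCast_nonneg #A
  have := hB.card_pos
  have := hB₁ne.card_pos
  set L := 1 + Real.log #A
  refine le_of_mul_le_mul_right ?_ (show 0 < (#B₁ ^ 3 * M ^ 4 * #B : ℝ) by positivity)
  calc (#B ^ 6 * #A ^ 9 : ℝ) * (#B₁ ^ 3 * M ^ 4 * #B)
      = #B₁ ^ 3 * (#B ^ 3 * M ^ 4 * #A) * (#A ^ 2 * #B) ^ 4 := by ring
    _ ≤ 1024 * #(A + B) ^ 10 * (#(A * B) * (M * #B₁ * L)) ^ 4 := by
      gcongr ?_ * ?_ ^ 4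
      exact_mod_cast growth_le
    _ = 1024 * #(A + B) ^ 10 * #(A * B) ^ 4 * L ^ 4 * (#B₁ ^ 3 * M ^ 4 * #B₁) := by ring
    _ ≤ 1024 * #(A + B) ^ 10 * #(A * B) ^ 4 * L ^ 4 * (#B₁ ^ 3 * M ^ 4 * #B) := by gcongr

lemma card_pow_six_mul_card_pow_nine_le (hA : A.Nonempty) (hB : B.Nonempty) (hp : #B ^ 2 ≤ p) :
    (#B ^ 6 * #A ^ 9 : ℝ) ≤ 65536 * #(A + B) ^ 10 * #(A * B) ^ 4 * (1 + Real.log #A) ^ 4 := by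
  have one_le_log : 1 ≤ 1 + Real.log #A := by linarith [Real.log_natCast_nonneg #A]
  obtain ⟨b, rfl⟩ | hnt := hB.exists_eq_singleton_or_nontrivial
  · have hA₁ : (1 : ℝ) ≤ #A := mod_cast hA.card_pos
    have hAB : (1 : ℝ) ≤ #(A * {b}) := mod_cast (hA.mul hB).card_pos
    calc (#({b} : Finset (ZMod p)) ^ 6 * #A ^ 9 : ℝ) = 1 * #A ^ 9 * 1 * 1 := by simp
      _ ≤ 65536 * #(A + {b}) ^ 10 * #(A * {b}) ^ 4 * (1 + Real.log #A) ^ 4 := by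
        rw [card_add_singleton]
        gcongr
        · norm_num
        · norm_num
        · exact one_le_pow₀ hAB
        · exact one_le_pow₀ one_le_log
  have hsub : B.erase 0 ⊆ B := erase_subset 0 B
  have card_le : #B ≤ 2 * #(B.erase 0) := by
    have h₁ : #B - 1 ≤ #(B.erase 0) := pred_card_le_card_erase
    have h₂ : 1 < #B := one_lt_card_iff_nontrivial.2 hnt
    lia
  have hne : (B.erase 0).Nonempty := card_pos.1 (by have := hB.card_pos; lia)
  calc (#B ^ 6 * #A ^ 9 : ℝ) ≤ (2 * #(B.erase 0)) ^ 6 * #A ^ 9 := by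
        gcongr; exact_mod_cast card_le
    _ = 64 * (#(B.erase 0) ^ 6 * #A ^ 9) := by ring
    _ ≤ 64 * (1024 * #(A + B.erase 0) ^ 10 * #(A * B.erase 0) ^ 4 * (1 + Real.log #A) ^ 4) := by
      gcongr 64 * ?_
      exact card_pow_six_mul_card_pow_nine_le_of_zero_notMem hA hne (notMem_erase 0 B)
        ((Nat.pow_le_pow_left (card_le_card hsub) 2).trans hp)
    _ ≤ 64 * (1024 * #(A + B) ^ 10 * #(A * B) ^ 4 * (1 + Real.log #A) ^ 4) := by gcongr
    _ = 65536 * #(A + B) ^ 10 * #(A * B) ^ 4 * (1 + Real.log #A) ^ 4 := by ring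

lemma card_pow_six_div_card_pow_five_le (hA : 2 ≤ #A) (hB : B.Nonempty)
    (hp : #B ^ 2 ≤ p) :
    (#B ^ 6 / #A ^ 5 : ℝ) ≤
      65536 * 3 ^ 4 * Real.log #A ^ 4 * (max (#(A + B) / #A) (#(A * B) / #A) : ℝ) ^ 14 := by
  have hA₀ : 0 < #A := by lia
  have := Real.log_natCast_nonneg #A
  rw [max_div_div_right (by positivity), div_pow, mul_div_assoc', div_le_div_iff₀ (by positivity)
    (by positivity)]
  set s : ℝ := max #(A + B) #(A * B)
  calc (#B ^ 6 * #A ^ 14 : ℝ) = #B ^ 6 * #A ^ 9 * #A ^ 5 := by ring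
    _ ≤ 65536 * #(A + B) ^ 10 * #(A * B) ^ 4 * (1 + Real.log #A) ^ 4 * #A ^ 5 := by
      gcongr ?_ * _
      exact card_pow_six_mul_card_pow_nine_le (card_pos.1 hA₀) hB hp
    _ ≤ 65536 * s ^ 10 * s ^ 4 * (3 * Real.log #A) ^ 4 * #A ^ 5 := by
      gcongr
      · exact le_max_left _ _
      · exact le_max_right _ _
      · exact one_add_log_le_three_mul_log (mod_cast hA)
    _ = 65536 * 3 ^ 4 * Real.log #A ^ 4 * s ^ 14 * #A ^ 5 := by ring

end PrimeField

theorem different_sets_small_general :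
    ∃ c α : ℝ, 0 < c ∧ 0 ≤ α ∧ ∀ (p : ℕ), p.Prime → ∀ A B : Finset (ZMod p),
      A.Nonempty → B.Nonempty → (B.card : ℝ) ≤ Real.sqrt p →
      c * (Real.log (A.card : ℝ)) ^ (-α) *
          ((B.card : ℝ) ^ 6 / (A.card : ℝ) ^ 5) ^ ((1 : ℝ) / 14) ≤
        max (((A + B).card : ℝ) / (A.card : ℝ)) (((A * B).card : ℝ) / (A.card : ℝ)) := by
  refine ⟨(65536 * 3 ^ 4) ^ (-(1 / 14) : ℝ), 4 / 14, by positivity, by norm_num,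
    fun p hp A B hA hB hBp ↦ ?_⟩
  have := Fact.mk hp
  obtain hA₁ | hA₂ : #A = 1 ∨ 2 ≤ #A := by have := hA.card_pos; lia
  -- For `#A = 1` the left side vanishes, since `Real.log 1 = 0` and `0 ^ (-α) = 0`.
  · rw [hA₁, Nat.cast_one, Real.log_one, Real.zero_rpow (by norm_num), mul_zero, zero_mul]
    positivity
  have hp₂ : #B ^ 2 ≤ p := mod_cast (Real.le_sqrt' (mod_cast hB.card_pos)).1 hBp
  have log_pos : 0 < Real.log #A := Real.log_pos (mod_cast hA₂)
  exact_mod_cast rpow_neg_mul_rpow_neg_mul_rpow_le (m := 4) (n := 14) (by positivity)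
    (by positivity) (by positivity) log_pos (by norm_num)
    (card_pow_six_div_card_pow_five_le hA₂ hB hp₂)

theorem different_sets_small :
    ∃ c α : ℝ, 0 < c ∧ 0 ≤ α ∧ ∀ (p : ℕ), p.Prime → ∀ A B : Finset (ZMod p),
      A.Nonempty → B.Nonempty → B.card ≤ A.card → (A.card : ℝ) ≤ Real.sqrt p →
      c * (Real.log (A.card : ℝ)) ^ (-α) *
          ((B.card : ℝ) ^ 6 / (A.card : ℝ) ^ 5) ^ ((1 : ℝ) / 14) ≤
        max (((A + B).card : ℝ) / (A.card : ℝ)) (((A * B).card : ℝ) / (A.card : ℝ)) := by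
  obtain ⟨c, α, hc, hα, h⟩ := different_sets_small_general
  exact ⟨c, α, hc, hα, fun p hp A B hA hB hBA hAp ↦
    h p hp A B hA hB ((Nat.cast_le.2 hBA).trans hAp)⟩
end
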